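/- arXiv:1902.09367 — 9 statements merged into one kernel-verified Lean document; each statement's English description precedes it below -/
import Mathlib

section
/- Let A be a unital C*-algebra and I a closed two-sided ideal of A. If p and q are projections in A such that p − q ∈ I and ‖p − q‖ < 1, then there exists a unitary u ∈ A with u − 1 ∈ I, u q u* = p, and ‖u − 1‖ ≤ 4‖p − q‖. -/
/-- Let `A` be a unital C*-algebra and `I` a closed two-sided ideal of `A`.
If `p` and `q` are projections in `A` such that `p - q ∈ I` and `‖p - q‖ < 1`, then there
exists a unitary `u ∈ A` with `u - 1 ∈ I`, `u q u* = p`, and `‖u - 1‖ ≤ 4‖p - q‖`. -/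
theorem projection_perturbation_unitary
    {A : Type*} [CStarAlgebra A]
    (I : TwoSidedIdeal A) (hI : IsClosed (I : Set A))
    (p q : A) (hp_sa : IsSelfAdjoint p) (hp_idem : p * p = p)
    (hq_sa : IsSelfAdjoint q) (hq_idem : q * q = q)
    (hpq : p - q ∈ I) (hnorm : ‖p - q‖ < 1) :
    ∃ u : A, u ∈ unitary A ∧ u - 1 ∈ I ∧ u * q * star u = p ∧
      ‖u - 1‖ ≤ 4 * ‖p - q‖ := by
  rcases subsingleton_or_nontrivial A with hs | hn
  · exact ⟨1, one_mem _, by simpa using I.zero_mem, Subsingleton.elim _ _, by simp⟩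
  obtain ⟨e, he⟩ : ∃ e : A, e = (p - q) * (p - q) := ⟨_, rfl⟩
  have hd : IsSelfAdjoint (p - q) := hp_sa.sub hq_sa
  have hesa : IsSelfAdjoint e := by
    rw [he, isSelfAdjoint_iff, star_mul, hd.star_eq]
  have hee : e = p + q - p * q - q * p := by
    rw [he]; simp only [sub_mul, mul_sub, hp_idem, hq_idem]; abel
  have hen : ‖e‖ ≤ ‖p - q‖ ^ 2 := by rw [he, sq]; exact norm_mul_le _ _
  have hen1 : ‖e‖ < 1 := by nlinarith [norm_nonneg (p - q)]
  have heI : e ∈ I := he ▸ I.mul_mem_left _ _ hpq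
  have hsp : ∀ x ∈ spectrum ℝ e, |x| ≤ ‖e‖ := fun x hx => by
    simpa using spectrum.norm_le_norm_of_mem hx
  have hpos : ∀ x ∈ spectrum ℝ e, 0 < 1 - x := fun x hx => by
    have := (abs_le.1 (hsp x hx)).2; linarith
  have hsq : ∀ x ∈ spectrum ℝ e, √(1 - x) ≠ 0 := fun x hx => (Real.sqrt_pos.2 (hpos x hx)).ne'
  have hpl : ∀ x ∈ spectrum ℝ e, 1 + √(1 - x) ≠ 0 := fun x hx => by positivity
  have hc0 : ContinuousOn (fun x : ℝ => √(1 - x)) (spectrum ℝ e) := by fun_prop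
  have hc1 : ContinuousOn (fun x : ℝ => (√(1 - x))⁻¹) (spectrum ℝ e) := hc0.inv₀ hsq
  have hc2 : ContinuousOn (fun x : ℝ => (√(1 - x))⁻¹ * (1 + √(1 - x))⁻¹) (spectrum ℝ e) :=
    hc1.mul ((continuousOn_const.add hc0).inv₀ hpl)
  have hid : cfc (fun x : ℝ => x) e = e := cfc_id' ℝ e
  have hone : cfc (fun _ : ℝ => (1 : ℝ)) e = 1 := cfc_const_one ℝ e
  have h1e : cfc (fun x : ℝ => 1 - x) e = 1 - e := by
    rw [cfc_sub (fun _ : ℝ => (1 : ℝ)) (fun x : ℝ => x) e, hid, hone]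
  obtain ⟨r, hr⟩ : ∃ r : A, r = cfc (fun x : ℝ => (√(1 - x))⁻¹) e := ⟨_, rfl⟩
  have hrsa : star r = r := by
    rw [hr]; exact (cfc_predicate (R := ℝ) (p := IsSelfAdjoint) _ e).star_eq
  have hrcomm : ∀ b : A, Commute e b → Commute r b := fun b hb => by
    rw [hr]; exact hb.cfc_real _
  have hcr : cfc (fun x : ℝ => √(1 - x)) e = (1 - e) * r := by
    rw [← h1e, hr, ← cfc_mul (fun x : ℝ => 1 - x) _ e (by fun_prop) hc1]
    refine cfc_congr fun x hx => ?_
    have h := Real.mul_self_sqrt (hpos x hx).le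
    have := hsq x hx
    show √(1 - x) = (1 - x) * (√(1 - x))⁻¹
    nth_rewrite 2 [← h]
    field_simp
  have hrr : (1 - e) * r * r = 1 := by
    rw [← hcr, hr, ← cfc_mul _ _ e hc0 hc1, ← hone]
    exact cfc_congr fun x hx => mul_inv_cancel₀ (hsq x hx)
  have hr1 : r - 1 ∈ I := by
    have : r - 1 = e * cfc (fun x : ℝ => (√(1 - x))⁻¹ * (1 + √(1 - x))⁻¹) e := by
      nth_rewrite 1 [← hid]
      rw [← cfc_mul (fun x : ℝ => x) _ e (by fun_prop) hc2, hr, ← hone, 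
        ← cfc_sub _ (fun _ : ℝ => (1 : ℝ)) e hc1]
      refine cfc_congr fun x hx => ?_
      have h := Real.mul_self_sqrt (hpos x hx).le
      have h1 := hsq x hx
      have h2 := hpl x hx
      show (√(1 - x))⁻¹ - 1 = x * ((√(1 - x))⁻¹ * (1 + √(1 - x))⁻¹)
      field_simp
      linarith
    rw [this]; exact I.mul_mem_right _ _ heI
  have hcn : ‖1 - (1 - e) * r‖ ≤ ‖e‖ := by
    rw [← hcr, ← hone, ← cfc_sub (fun _ : ℝ => (1 : ℝ)) _ e (by fun_prop) hc0]
    refine norm_cfc_le (norm_nonneg _) fun x hx => le_trans ?_ (hsp x hx)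
    have h := Real.mul_self_sqrt (hpos x hx).le
    have h0 := Real.sqrt_nonneg (1 - x)
    show |1 - √(1 - x)| ≤ |x|
    have hx' : x = (1 - √(1 - x)) * (1 + √(1 - x)) := by linarith
    have : |x| = |1 - √(1 - x)| * (1 + √(1 - x)) := by
      nth_rewrite 1 [hx']
      rw [abs_mul, abs_of_nonneg (by linarith : 0 ≤ 1 + √(1 - x))]
    rw [this]
    nlinarith [abs_nonneg (1 - √(1 - x))]
  have hpp : ∀ z, p * (p * z) = p * z := fun z => by rw [← mul_assoc, hp_idem]
  have hqq : ∀ z, q * (q * z) = q * z := fun z => by rw [← mul_assoc, hq_idem]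
  have hep : Commute e p := by
    rw [hee, commute_iff_eq]
    simp only [sub_mul, mul_sub, add_mul, mul_add, mul_assoc, hp_idem, hq_idem, hpp, hqq]; abel
  have heq : Commute e q := by
    rw [hee, commute_iff_eq]
    simp only [sub_mul, mul_sub, add_mul, mul_add, mul_assoc, hp_idem, hq_idem, hpp, hqq]; abel
  have hrp := hrcomm p hep
  have hrq := hrcomm q heq
  obtain ⟨v, hv⟩ : ∃ v : A, v = 1 - p - q + p * q + p * q := ⟨_, rfl⟩
  obtain ⟨w, hw⟩ : ∃ w : A, w = 1 - p - q + q * p + q * p := ⟨_, rfl⟩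
  have hsv : star v = w := by
    rw [hv, hw]; simp [hp_sa.star_eq, hq_sa.star_eq]
  have hwv : w * v = 1 - e := by
    rw [hee, hv, hw]
    simp only [sub_mul, mul_sub, add_mul, mul_add, mul_assoc, hp_idem, hq_idem, hpp, hqq, one_mul, mul_one]; abel
  have hvw : v * w = 1 - e := by
    rw [hee, hv, hw]
    simp only [sub_mul, mul_sub, add_mul, mul_add, mul_assoc, hp_idem, hq_idem, hpp, hqq, one_mul, mul_one]; abel
  have hvq : v * q = p * v := by
    rw [hv]
    simp only [sub_mul, mul_sub, add_mul, mul_add, mul_assoc, hp_idem, hq_idem, hpp, hqq, one_mul, mul_one]; abel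
  have hadd : v + w = (1 - e) + (1 - e) := by
    rw [hee, hv, hw]; abel
  have hrv : Commute r v := by
    rw [hv]
    exact ((((Commute.one_right r).sub_right hrp).sub_right hrq).add_right
      (hrp.mul_right hrq)).add_right (hrp.mul_right hrq)
  have hrw : Commute r w := by
    rw [hw]
    exact ((((Commute.one_right r).sub_right hrp).sub_right hrq).add_right
      (hrq.mul_right hrp)).add_right (hrq.mul_right hrp)
  have hsu : star (v * r) = w * r := by
    rw [star_mul, hrsa, hsv, hrw.eq]
  have huu : star (v * r) * (v * r) = 1 := by
    rw [hsu, mul_assoc, ← mul_assoc r v, hrv.eq, mul_assoc v, ← mul_assoc, hwv, ← mul_assoc, hrr]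
  have huu' : (v * r) * star (v * r) = 1 := by
    rw [hsu, mul_assoc, ← mul_assoc r w, hrw.eq, mul_assoc w, ← mul_assoc, hvw, ← mul_assoc, hrr]
  refine ⟨v * r, Unitary.mem_iff.2 ⟨huu, huu'⟩, ?_, ?_, ?_⟩
  · have h1 : v * r - 1 = v * (r - 1) + ((p - q) * q - p * (p - q)) := by
      rw [hv]
      simp only [sub_mul, mul_sub, add_mul, mul_add, mul_assoc, hp_idem, hq_idem, hpp, hqq, one_mul, mul_one]; abel
    rw [h1]
    exact I.add_mem (I.mul_mem_left _ _ hr1)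
      (I.sub_mem (I.mul_mem_right _ _ hpq) (I.mul_mem_left _ _ hpq))
  · rw [mul_assoc v, hrq.eq, ← mul_assoc v, hvq, mul_assoc p, mul_assoc p, huu', mul_one]
  · have h2 : star (v * r - 1) * (v * r - 1) = (1 - (1 - e) * r) + (1 - (1 - e) * r) := by
      have : star (v * r - 1) * (v * r - 1)
          = star (v * r) * (v * r) - (v * r + star (v * r)) + 1 := by
        rw [star_sub, star_one, sub_mul, mul_sub]; simp only [mul_one, one_mul]; abel
      rw [this, huu, hsu, ← add_mul, hadd, add_mul]; abel
    have h3 : ‖v * r - 1‖ * ‖v * r - 1‖ ≤ 2 * ‖p - q‖ ^ 2 := by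
      rw [← CStarRing.norm_star_mul_self, h2]
      refine (norm_add_le _ _).trans ?_
      linarith
    refine abs_le_of_sq_le_sq' ?_ (by positivity) |>.2
    nlinarith [norm_nonneg (p - q)]
end

section
/- Let A be a unital C*-algebra and let Z ∈ A satisfy ‖Z − 1‖ < 1. Then Z is invertible, ‖Z*Z − 1‖ ≤ 3‖Z − 1‖, ‖(Z*Z)^{1/2} − 1‖ ≤ 3‖Z − 1‖, and the unitary U := Z·(Z*Z)^{−1/2} satisfies ‖U − 1‖ ≤ 4‖Z − 1‖. -/
/-- Let `A` be a unital C*-algebra and `Z ∈ A` with `‖Z − 1‖ < 1`. Then `Z` is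
invertible, `‖Z*Z − 1‖ ≤ 3‖Z − 1‖`, `‖(Z*Z)^{1/2} − 1‖ ≤ 3‖Z − 1‖`, and the unitary
`U := Z (Z*Z)^{-1/2}` satisfies `‖U − 1‖ ≤ 4‖Z − 1‖`. -/
theorem polar_decomposition_norm_estimates
    {A : Type*} [CStarAlgebra A] [PartialOrder A] [StarOrderedRing A]
    (Z : A) (hZ : ‖Z - 1‖ < 1) :
    IsUnit Z ∧
    ‖star Z * Z - 1‖ ≤ 3 * ‖Z - 1‖ ∧
    ‖CFC.sqrt (star Z * Z) - 1‖ ≤ 3 * ‖Z - 1‖ ∧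
    Z * CFC.rpow (star Z * Z) (-(1 / 2) : ℝ) ∈ unitary A ∧
    ‖Z * CFC.rpow (star Z * Z) (-(1 / 2) : ℝ) - 1‖ ≤ 4 * ‖Z - 1‖ := by
  have hu : IsUnit Z := by
    have h := isUnit_one_sub_of_norm_lt_one (x := 1 - Z) (by rwa [norm_sub_rev])
    simpa using h
  have hd : 0 ≤ ‖Z - 1‖ := norm_nonneg _
  have h1 : ‖star Z * Z - 1‖ ≤ 3 * ‖Z - 1‖ := by
    have e : star Z * Z - 1 = star (Z - 1) * (Z - 1) + star (Z - 1) + (Z - 1) := by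
      simp only [star_sub, star_one]
      noncomm_ring
    rw [e]
    have n1 := norm_add₃_le (a := star (Z - 1) * (Z - 1)) (b := star (Z - 1)) (c := Z - 1)
    rw [CStarRing.norm_star_mul_self, norm_star] at n1
    nlinarith
  have ha : 0 ≤ star Z * Z := star_mul_self_nonneg Z
  have hau : IsUnit (star Z * Z) := hu.star.mul hu
  have h2 : ‖CFC.sqrt (star Z * Z) - 1‖ ≤ ‖star Z * Z - 1‖ := by
    generalize star Z * Z = a at ha
    have hsa : IsSelfAdjoint a := .of_nonneg ha
    have e1 : CFC.sqrt a - 1 = cfc (fun x : ℝ => √x - 1) a := by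
      rw [cfc_sub (fun x : ℝ => √x) (fun _ => (1 : ℝ)) a, cfc_const_one ℝ a,
        CFC.sqrt_eq_real_sqrt a, cfcₙ_eq_cfc]
    have e2 : a - 1 = cfc (fun x : ℝ => x - 1) a := by
      rw [cfc_sub (fun x : ℝ => x) (fun _ => (1 : ℝ)) a, cfc_const_one ℝ a, cfc_id' ℝ a]
    rw [e1]
    refine norm_cfc_le (norm_nonneg _) fun x hx => ?_
    have hx0 : 0 ≤ x := spectrum_nonneg_of_nonneg ha hx
    have h3 : ‖x - 1‖ ≤ ‖a - 1‖ := by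
      rw [e2]
      exact norm_apply_le_norm_cfc (fun x : ℝ => x - 1) a hx
    refine le_trans ?_ h3
    have e3 : x - 1 = (√x - 1) * (√x + 1) := by
      nlinarith [Real.mul_self_sqrt hx0]
    rw [e3, norm_mul]
    refine le_mul_of_one_le_right (norm_nonneg _) ?_
    rw [Real.norm_eq_abs]
    exact le_trans (by linarith [Real.sqrt_nonneg x]) (le_abs_self _)
  have hsp : IsStrictlyPositive (star Z * Z) := hau.isStrictlyPositive ha
  have hrs : CFC.rpow (star Z * Z) (-(1 / 2) : ℝ) * CFC.sqrt (star Z * Z) = 1 := by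
    rw [CFC.sqrt_eq_rpow]
    exact CFC.rpow_neg_mul_rpow _ hsp
  have hsr : CFC.sqrt (star Z * Z) * CFC.rpow (star Z * Z) (-(1 / 2) : ℝ) = 1 := by
    rw [CFC.sqrt_eq_rpow]
    exact CFC.rpow_mul_rpow_neg _ hsp
  have hss := CFC.sqrt_mul_sqrt_self (star Z * Z) ha
  have hr0 : 0 ≤ CFC.rpow (star Z * Z) (-(1 / 2) : ℝ) := CFC.rpow_nonneg
  have hrst := (IsSelfAdjoint.of_nonneg hr0).star_eq
  generalize CFC.rpow (star Z * Z) (-(1 / 2) : ℝ) = r at *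
  generalize CFC.sqrt (star Z * Z) = s at *
  have hUl : star (Z * r) * (Z * r) = 1 := by
    rw [star_mul, hrst]
    calc r * star Z * (Z * r) = r * (star Z * Z) * r := by noncomm_ring
      _ = (r * s) * (s * r) := by rw [← hss]; noncomm_ring
      _ = 1 := by rw [hrs, hsr, one_mul]
  have hUu : IsUnit (Z * r) := hu.mul ⟨⟨r, s, hrs, hsr⟩, rfl⟩
  have hU : Z * r ∈ unitary A := by
    refine Unitary.mem_iff.2 ⟨hUl, ?_⟩
    obtain ⟨v, hv⟩ := hUu
    rw [← hv] at hUl ⊢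
    rw [Units.eq_inv_of_mul_eq_one_right hUl, Units.mul_inv]
  refine ⟨hu, h1, h2.trans h1, hU, ?_⟩
  have e : Z * r - 1 = Z * r * (1 - s) + (Z - 1) := by
    have : Z * r * s = Z := by rw [mul_assoc, hrs, mul_one]
    rw [mul_sub, this]
    noncomm_ring
  rw [e]
  refine (norm_add_le _ _).trans ?_
  rw [CStarRing.norm_mem_unitary_mul _ hU, norm_sub_rev 1 s]
  linarith
end

section
/- Let D be a unital C*-algebra and A ⊆ D a unital C*-subalgebra which is simple. Suppose u ∈ D is a unitary commuting with every element of A, and u is strongly full in D. Then every nonzero element of the C*-subalgebra of D generated by A ∪ {u} is full in D. -/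
open Filter Topology

lemma aux_exists_killed {D : Type*} [CStarAlgebra D] (x c g : D) (hx : IsSelfAdjoint x)
    (hcx : Commute c x) (hlt : ‖c * x‖ < ‖x‖) (hg : g * c = g) :
    ∃ h ∈ StarAlgebra.elemental ℂ x, h ≠ 0 ∧ g * h = 0 := by
  have hM : 0 < ‖x‖ := (norm_nonneg _).trans_lt hlt
  have hnt : Nontrivial D := ⟨x, 0, norm_pos_iff.1 hM⟩
  have hn : IsStarNormal x := hx.isStarNormal
  obtain ⟨ρ, hρ1, hρ2⟩ := exists_between hlt
  have hρ : 0 < ρ := (norm_nonneg _).trans_lt hρ1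
  let f : ℂ → ℂ := fun t => ((max (‖t‖ - ρ) 0 : ℝ) : ℂ)
  have hf : Continuous f := by fun_prop
  refine ⟨cfc f x, cfc_mem_elemental f x, ?_, ?_⟩
  · obtain ⟨⟨t, ht, htx⟩, -⟩ := IsometricContinuousFunctionalCalculus.isGreatest_norm_spectrum (𝕜 := ℂ) x
    have h1 := norm_apply_le_norm_cfc f x ht hf.continuousOn
    intro h0
    rw [h0, norm_zero] at h1
    have h2 : f t = 0 := norm_le_zero_iff.1 h1
    simp only [f, Complex.ofReal_eq_zero] at h2
    have h3 : ‖t‖ = ‖x‖ := htx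
    have := le_max_left (‖t‖ - ρ) 0
    linarith
  · have key : ∀ k : ℕ, ‖g * cfc f x‖ ≤ (‖g‖ * ‖x‖) * (‖c * x‖ / ρ) ^ k := by
      intro k
      let m : ℂ → ℝ := fun t => max ‖t‖ ρ
      have hm0 : ∀ t, 0 < m t := fun t => lt_max_of_lt_right hρ
      let q : ℂ → ℂ := fun t => f t * ((star t) ^ k * (((m t)⁻¹ ^ (2 * k) : ℝ) : ℂ))
      have hmc : Continuous m := by fun_prop
      have hmi : Continuous (fun t => (m t)⁻¹) := hmc.inv₀ (fun t => (hm0 t).ne')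
      have hq : Continuous q := by
        refine hf.mul (Continuous.mul (by fun_prop) ?_)
        exact Complex.continuous_ofReal.comp (hmi.pow _)
      have hfq : cfc f x = x ^ k * cfc q x := by
        conv_rhs => rw [← cfc_pow_id (R := ℂ) x k]
        rw [← cfc_mul (fun t : ℂ => t ^ k) q x (by fun_prop) hq.continuousOn]
        congr 1
        funext t
        simp only [q]
        by_cases h : ‖t‖ ≤ ρ
        · have : f t = 0 := by simp [f, h]
          simp [this]
        · push Not at h
          have h1 : m t = ‖t‖ := max_eq_left h.le
          have h0 : (‖t‖ : ℂ) ≠ 0 := by exact_mod_cast (hρ.trans h).ne'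
          have h2 : t * star t = (‖t‖ : ℂ) ^ 2 := by
            simpa using Complex.mul_conj' t
          have h3 : t ^ k * star t ^ k = (‖t‖ : ℂ) ^ (2 * k) := by
            rw [← mul_pow, h2, pow_mul]
          rw [h1]
          calc f t = f t * ((‖t‖ : ℂ) ^ (2 * k) * ((‖t‖ : ℂ)⁻¹) ^ (2 * k)) := by
                rw [← mul_pow, mul_inv_cancel₀ h0]; simp
            _ = _ := by rw [← h3]; push_cast; ring
      have hqn : ‖cfc q x‖ ≤ ‖x‖ * (ρ⁻¹) ^ k := by
        refine norm_cfc_le (by positivity) fun t ht => ?_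
        have ht' : ‖t‖ ≤ ‖x‖ := spectrum.norm_le_norm_of_mem ht
        have hm1 : ‖t‖ ≤ m t := le_max_left _ _
        have hm2 : (m t)⁻¹ ≤ ρ⁻¹ := inv_anti₀ hρ (le_max_right _ _)
        have hf1 : ‖f t‖ ≤ ‖x‖ := by
          simp only [f, Complex.norm_real, Real.norm_eq_abs]
          rw [abs_of_nonneg (le_max_right _ _)]
          exact max_le (by linarith) hM.le
        have h4 : ‖((star t) ^ k * (((m t)⁻¹ ^ (2 * k) : ℝ) : ℂ))‖ ≤ (ρ⁻¹) ^ k := by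
          rw [norm_mul, norm_pow, norm_star, Complex.norm_real, Real.norm_eq_abs,
            abs_of_nonneg (by have := hm0 t; positivity), two_mul, pow_add, ← mul_assoc, ← mul_pow]
          have h5 : ‖t‖ * (m t)⁻¹ ≤ 1 := by
            rw [← div_eq_mul_inv]; exact (div_le_one (hm0 t)).2 hm1
          have := hm0 t
          calc _ ≤ 1 ^ k * (ρ⁻¹) ^ k := by gcongr
            _ = _ := by simp
        rw [norm_mul]
        gcongr
      have hgc : ∀ k : ℕ, g * c ^ k = g := by
        intro k
        induction k with
        | zero => simp
        | succ k ih => rw [pow_succ', ← mul_assoc, hg, ih]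
      have e : g * cfc f x = g * (c * x) ^ k * cfc q x := by
        rw [hcx.mul_pow, ← mul_assoc, hgc, hfq, mul_assoc]
      rw [e]
      calc ‖g * (c * x) ^ k * cfc q x‖ ≤ ‖g‖ * ‖c * x‖ ^ k * (‖x‖ * (ρ⁻¹) ^ k) := by
            refine (norm_mul_le _ _).trans ?_
            gcongr
            refine (norm_mul_le _ _).trans ?_
            gcongr
            exact norm_pow_le _ _
        _ = _ := by rw [div_eq_mul_inv, mul_pow]; ring
    have hlim : Tendsto (fun k : ℕ => (‖g‖ * ‖x‖) * (‖c * x‖ / ρ) ^ k) atTop (𝓝 0) := by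
      have := (tendsto_pow_atTop_nhds_zero_of_lt_one (r := ‖c * x‖ / ρ) (by positivity)
        ((div_lt_one hρ).2 hρ1)).const_mul (‖g‖ * ‖x‖)
      simpa using this
    exact norm_le_zero_iff.1 (ge_of_tendsto' hlim key)

lemma aux_simple {D : Type*} [CStarAlgebra D] (S : StarSubalgebra ℂ D)
    (hS : ∀ J : TwoSidedIdeal S, IsClosed (J : Set S) → J = ⊥ ∨ J = ⊤)
    (K : Set D) (h0 : (0 : D) ∈ K) (hadd : ∀ x y, x ∈ K → y ∈ K → x + y ∈ K)
    (hneg : ∀ x, x ∈ K → -x ∈ K) (hl : ∀ a ∈ S, ∀ x ∈ K, a * x ∈ K)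
    (hr : ∀ a ∈ S, ∀ x ∈ K, x * a ∈ K) (s : D) (hs : s ∈ S) (hsK : s ∈ K) (hs0 : s ≠ 0) :
    ∃ k ∈ K, ‖k - 1‖ < 1 / 2 := by
  let K' : Set S := closure ((↑) ⁻¹' K)
  let J : TwoSidedIdeal S := TwoSidedIdeal.mk' K' (subset_closure (by simpa using h0))
    (fun {x y} hx hy => map_mem_closure₂ continuous_add hx hy
      (fun a ha b hb => by simpa using hadd _ _ ha hb))
    (fun {x} hx => map_mem_closure continuous_neg hx (fun a ha => by simpa using hneg _ ha))
    (fun {x y} hy => map_mem_closure (continuous_const_mul x) hy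
      (fun a ha => by simpa using hl _ x.2 _ ha))
    (fun {x y} hx => map_mem_closure (f := fun a => a * y) (continuous_mul_const y) hx
      (fun a ha => by simpa using hr _ y.2 _ ha))
  have hJ : ∀ x, x ∈ J ↔ x ∈ K' := fun x => TwoSidedIdeal.mem_mk' ..
  have hJc : (J : Set S) = K' := Set.ext hJ
  rcases hS J (by rw [hJc]; exact isClosed_closure) with h | h
  · exfalso
    have : (⟨s, hs⟩ : S) ∈ J := (hJ _).2 (subset_closure hsK)
    rw [h, TwoSidedIdeal.mem_bot] at this
    exact hs0 (congrArg Subtype.val this)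
  · have : (1 : S) ∈ K' := (hJ _).1 (by rw [h]; trivial)
    obtain ⟨k, hk, hd⟩ := Metric.mem_closure_iff.1 this (1 / 2) (by norm_num)
    refine ⟨k, hk, ?_⟩
    rw [dist_comm, dist_eq_norm] at hd
    exact hd

structure AuxBump {D : Type*} [CStarAlgebra D] (u : D) (l : ℂ) (b : ℕ → D) : Prop where
  norm_le : ∀ n, ‖b n‖ ≤ 1
  succ_mul : ∀ n, b (n + 1) * b n = b (n + 1)
  ne_zero : ∀ n, b n ≠ 0
  sa : ∀ n, star (b n) = b n
  comm : ∀ n y, Commute u y → Commute (star u) y → Commute (b n) y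
  tend : Tendsto (fun n => b n * (u - algebraMap ℂ D l)) atTop (𝓝 0)

section
variable {D : Type*} [CStarAlgebra D] {S : StarSubalgebra ℂ D} {u : D} {l : ℂ} {b : ℕ → D}

lemma AuxBump.add_mul (hb : AuxBump u l b) (n k : ℕ) : b (n + k + 1) * b n = b (n + k + 1) := by
  induction k with
  | zero => exact hb.succ_mul n
  | succ k ih =>
    have := hb.succ_mul (n + k + 1)
    calc b (n + (k + 1) + 1) * b n = b (n + k + 1 + 1) * b (n + k + 1) * b n := by
            rw [this]; rfl
      _ = _ := by rw [mul_assoc, ih, this]; rfl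

lemma AuxBump.mul_of_lt (hb : AuxBump u l b) {n m : ℕ} (h : n < m) : b m * b n = b m := by
  obtain ⟨k, rfl⟩ := Nat.exists_eq_add_of_lt h
  exact hb.add_mul n k

lemma AuxBump.le_norm (hb : AuxBump u l b) (hSc : IsClosed (S : Set D))
    (hS : ∀ J : TwoSidedIdeal S, IsClosed (J : Set S) → J = ⊥ ∨ J = ⊤)
    (hc : ∀ n, ∀ x ∈ S, Commute (b n) x) (s : D) (hs : s ∈ S) (n : ℕ) : ‖s‖ ≤ ‖b n * s‖ := by
  by_contra! hlt
  have hxS : star s * s ∈ S := mul_mem (star_mem hs) hs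
  have hcx : Commute (b n * b n) (star s * s) :=
    (hc n _ hxS).mul_left (hc n _ hxS)
  have e : (b n * b n) * (star s * s) = star (b n * s) * (b n * s) := by
    rw [star_mul, hb.sa]
    have h1 := (hc n _ (star_mem hs)).eq
    calc (b n * b n) * (star s * s) = b n * (b n * star s) * s := by simp only [mul_assoc]
      _ = b n * (star s * b n) * s := by rw [h1]
      _ = b n * star s * (b n * s) := by simp only [mul_assoc]
      _ = _ := by rw [h1]
  have hlt' : ‖(b n * b n) * (star s * s)‖ < ‖star s * s‖ := by
    rw [e, CStarRing.norm_star_mul_self, CStarRing.norm_star_mul_self]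
    gcongr
  obtain ⟨h, hmem, h0, hk⟩ := aux_exists_killed (star s * s) (b n * b n) (b (n + 1))
    (IsSelfAdjoint.star_mul_self s) hcx hlt' (by rw [← mul_assoc, hb.succ_mul, hb.succ_mul])
  have hhS : h ∈ S := StarAlgebra.elemental.le_of_mem hSc hxS hmem
  obtain ⟨k, ⟨m, hm⟩, hk1⟩ := aux_simple S hS {x | ∃ m, ∀ p, m ≤ p → b p * x = 0}
    ⟨0, by simp⟩
    (by
      rintro x y ⟨m, hm⟩ ⟨m', hm'⟩
      refine ⟨max m m', fun p hp => ?_⟩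
      rw [mul_add, hm p (le_trans (le_max_left _ _) hp), hm' p (le_trans (le_max_right _ _) hp),
        add_zero])
    (by
      rintro x ⟨m, hm⟩
      exact ⟨m, fun p hp => by rw [mul_neg, hm p hp, neg_zero]⟩)
    (by
      rintro a ha x ⟨m, hm⟩
      exact ⟨m, fun p hp => by rw [← mul_assoc, (hc p a ha).eq, mul_assoc, hm p hp, mul_zero]⟩)
    (by
      rintro a ha x ⟨m, hm⟩
      exact ⟨m, fun p hp => by rw [← mul_assoc, hm p hp, zero_mul]⟩)
    h hhS
    ⟨n + 2, fun p hp => by rw [← hb.mul_of_lt (show n + 1 < p by omega), mul_assoc, hk, mul_zero]⟩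
    h0
  have h1 := hm m le_rfl
  have h2 : b m = - (b m * (k - 1)) := by rw [mul_sub, h1]; simp
  have h3 : ‖b m‖ ≤ ‖b m‖ * ‖k - 1‖ := by
    conv_lhs => rw [h2, norm_neg]
    exact norm_mul_le _ _
  have h4 : 0 < ‖b m‖ := norm_pos_iff.2 (hb.ne_zero m)
  nlinarith

/-- The star subalgebra of elements having a value at `l`. -/
def auxT (S : StarSubalgebra ℂ D) (hb : AuxBump u l b) (hc : ∀ n, ∀ x ∈ S, Commute (b n) x) :
    StarSubalgebra ℂ D where
  carrier := {z | (∀ n, Commute (b n) z) ∧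
    ∃ s ∈ S, Tendsto (fun n => b n * (z - s)) atTop (𝓝 0)}
  mul_mem' := by
    rintro z z' ⟨hz, s, hs, h⟩ ⟨hz', s', hs', h'⟩
    refine ⟨fun n => (hz n).mul_right (hz' n), s * s', mul_mem hs hs', ?_⟩
    have := (h.mul_const z').add (h'.const_mul s)
    simp only [zero_mul, mul_zero, add_zero] at this
    refine this.congr fun n => ?_
    rw [← mul_assoc s, ← (hc n s hs).eq]
    noncomm_ring
  add_mem' := by
    rintro z z' ⟨hz, s, hs, h⟩ ⟨hz', s', hs', h'⟩
    refine ⟨fun n => (hz n).add_right (hz' n), s + s', add_mem hs hs', ?_⟩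
    have := h.add h'
    simp only [add_zero] at this
    refine this.congr fun n => ?_
    noncomm_ring
  algebraMap_mem' := fun r =>
    ⟨fun n => Algebra.commutes' r (b n) |>.symm, algebraMap ℂ D r, algebraMap_mem S r, by simp⟩
  star_mem' := by
    rintro z ⟨hz, s, hs, h⟩
    have hz' : ∀ n, Commute (b n) (star z) := fun n => by
      have := (hz n).star_star
      rwa [hb.sa] at this
    refine ⟨hz', star s, star_mem hs, ?_⟩
    have := h.star
    rw [star_zero] at this
    refine this.congr fun n => ?_
    rw [star_mul, hb.sa, star_sub]
    exact ((hz' n).sub_right (hc n _ (star_mem hs))).eq.symm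

lemma auxT_closed (hb : AuxBump u l b) (hSc : IsClosed (S : Set D))
    (hS : ∀ J : TwoSidedIdeal S, IsClosed (J : Set S) → J = ⊥ ∨ J = ⊤)
    (hc : ∀ n, ∀ x ∈ S, Commute (b n) x) : IsClosed (auxT S hb hc : Set D) := by
  have hbd : ∀ n (x : D), ‖b n * x‖ ≤ ‖x‖ := fun n x =>
    (norm_mul_le _ _).trans (by have := hb.norm_le n; nlinarith [norm_nonneg x])
  rw [← isSeqClosed_iff_isClosed]
  intro z z0 hz hlim
  have hz1 : ∀ k n, Commute (b n) (z k) := fun k => (hz k).1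
  have hz2 : ∀ k, ∃ s ∈ S, Tendsto (fun n => b n * (z k - s)) atTop (𝓝 0) := fun k => (hz k).2
  choose s hsS hs using hz2
  have hle : ∀ i j, ‖s i - s j‖ ≤ ‖z i - z j‖ := by
    intro i j
    have h1 := (((hs i).sub (hs j)).norm).add_const ‖z i - z j‖
    simp only [sub_zero, norm_zero, zero_add] at h1
    refine ge_of_tendsto' h1 fun n => ?_
    refine (hb.le_norm hSc hS hc _ (sub_mem (hsS i) (hsS j)) n).trans ?_
    have e : b n * (s i - s j) =
        b n * (z i - z j) - (b n * (z i - s i) - b n * (z j - s j)) := by noncomm_ring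
    rw [e]
    refine (norm_sub_le _ _).trans ?_
    have := hbd n (z i - z j)
    linarith
  have hcau : CauchySeq s := by
    have h2 := hlim.cauchySeq
    rw [Metric.cauchySeq_iff] at h2 ⊢
    intro ε hε
    obtain ⟨N, hN⟩ := h2 ε hε
    refine ⟨N, fun m hm n hn => ?_⟩
    have := hN m hm n hn
    rw [dist_eq_norm] at this ⊢
    exact (hle m n).trans_lt this
  obtain ⟨s0, hs0⟩ := cauchySeq_tendsto_of_complete hcau
  refine ⟨fun n => ?_, s0, hSc.mem_of_tendsto hs0 (Eventually.of_forall hsS), ?_⟩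
  · have h1 := hlim.const_mul (b n)
    have h2 := hlim.mul_const (b n)
    exact tendsto_nhds_unique h1 (h2.congr fun k => (hz1 k n).eq.symm)
  · rw [Metric.tendsto_atTop]
    intro ε hε
    have h1 := (hlim.dist (tendsto_const_nhds (x := z0))).add (hs0.dist (tendsto_const_nhds (x := s0)))
    simp only [dist_self, add_zero] at h1
    obtain ⟨k, hk⟩ := (h1.eventually (gt_mem_nhds (half_pos hε))).exists
    obtain ⟨N, hN⟩ := (Metric.tendsto_atTop.1 (hs k)) (ε / 2) (half_pos hε)
    refine ⟨N, fun n hn => ?_⟩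
    have h3 := hN n hn
    rw [dist_zero_right] at h3 ⊢
    rw [dist_eq_norm, dist_eq_norm] at hk
    have e : b n * (z0 - s0) = b n * (z k - s k) - (b n * (z k - z0) - b n * (s k - s0)) := by
      noncomm_ring
    rw [e]
    have := hbd n (z k - z0)
    have := hbd n (s k - s0)
    have := norm_sub_le (b n * (z k - s k)) (b n * (z k - z0) - b n * (s k - s0))
    have := norm_sub_le (b n * (z k - z0)) (b n * (s k - s0))
    linarith

lemma AuxBump.mem_span (hb : AuxBump u l b)
    (hS : ∀ J : TwoSidedIdeal S, IsClosed (J : Set S) → J = ⊥ ∨ J = ⊤)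
    (hc : ∀ n, ∀ x ∈ S, Commute (b n) x) (z s : D) (hs : s ∈ S) (hs0 : s ≠ 0)
    (h : Tendsto (fun n => b n * (z - s)) atTop (𝓝 0)) :
    ∃ n, b n ∈ (TwoSidedIdeal.span {z} : TwoSidedIdeal D) := by
  set I := (TwoSidedIdeal.span {z} : TwoSidedIdeal D) with hI
  obtain ⟨k, ⟨w, hw, hk⟩, hk1⟩ := aux_simple S hS
    {x | ∃ w ∈ I, Tendsto (fun n => b n * (w - x)) atTop (𝓝 0)}
    ⟨0, I.zero_mem, by simp⟩
    (by
      rintro x y ⟨w, hw, h⟩ ⟨w', hw', h'⟩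
      refine ⟨w + w', I.add_mem hw hw', ?_⟩
      have := h.add h'
      simp only [add_zero] at this
      refine this.congr fun n => ?_
      noncomm_ring)
    (by
      rintro x ⟨w, hw, h⟩
      refine ⟨-w, I.neg_mem hw, ?_⟩
      have := h.neg
      simp only [neg_zero] at this
      refine this.congr fun n => ?_
      noncomm_ring)
    (by
      rintro a ha x ⟨w, hw, h⟩
      refine ⟨a * w, I.mul_mem_left _ _ hw, ?_⟩
      have := h.const_mul a
      simp only [mul_zero] at this
      refine this.congr fun n => ?_
      rw [← mul_assoc, ← (hc n a ha).eq, mul_assoc, mul_sub a])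
    (by
      rintro a ha x ⟨w, hw, h⟩
      refine ⟨w * a, I.mul_mem_right _ _ hw, ?_⟩
      have := h.mul_const a
      simp only [zero_mul] at this
      refine this.congr fun n => ?_
      rw [mul_assoc, sub_mul])
    s hs ⟨z, TwoSidedIdeal.subset_span rfl, h⟩ hs0
  obtain ⟨n, hn⟩ := (Metric.tendsto_atTop.1 hk) (1 / 2) (by norm_num)
  have hn := hn n le_rfl
  rw [dist_zero_right] at hn
  refine ⟨n + 1, ?_⟩
  have hlt : ‖-(b n * (w - 1))‖ < 1 := by
    have e : b n * (w - 1) = b n * (w - k) + b n * (k - 1) := by noncomm_ring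
    rw [norm_neg, e]
    refine (norm_add_le _ _).trans_lt ?_
    have h1 := norm_mul_le (b n) (k - 1)
    have h2 := hb.norm_le n
    nlinarith [norm_nonneg (k - 1)]
  obtain ⟨v, hv⟩ := isUnit_one_sub_of_norm_lt_one hlt
  have h1 : b (n + 1) * (v : D) = b (n + 1) * w := by
    rw [hv, sub_neg_eq_add, mul_add, ← mul_assoc, hb.succ_mul]
    noncomm_ring
  have h2 : b (n + 1) = b (n + 1) * w * (↑v⁻¹ : D) := by
    rw [← h1, Units.mul_inv_cancel_right]
  rw [h2]
  exact I.mul_mem_right _ _ (I.mul_mem_left _ _ hw)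

end

/-- bump functions -/
noncomputable def auxF (l : ℂ) (n : ℕ) (t : ℂ) : ℂ :=
  ((max 0 (min 1 (2 - ‖t - l‖ * 4 ^ n)) : ℝ) : ℂ)

lemma auxF_cont (l : ℂ) (n : ℕ) : Continuous (auxF l n) := by
  unfold auxF
  fun_prop

lemma auxF_norm (l : ℂ) (n : ℕ) (t : ℂ) : ‖auxF l n t‖ ≤ 1 := by
  simp only [auxF, Complex.norm_real, Real.norm_eq_abs]
  rw [abs_of_nonneg (le_max_left _ _)]
  exact max_le zero_le_one (min_le_left _ _)

lemma auxF_self (l : ℂ) (n : ℕ) : auxF l n l = 1 := by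
  simp [auxF]

lemma auxF_zero (l : ℂ) (n : ℕ) (t : ℂ) (h : 2 ≤ ‖t - l‖ * 4 ^ n) : auxF l n t = 0 := by
  have : max 0 (min 1 (2 - ‖t - l‖ * 4 ^ n)) = 0 :=
    max_eq_left ((min_le_right _ _).trans (by linarith))
  simp [auxF, this]

lemma auxF_one (l : ℂ) (n : ℕ) (t : ℂ) (h : ‖t - l‖ * 4 ^ n ≤ 1) : auxF l n t = 1 := by
  have : min 1 (2 - ‖t - l‖ * 4 ^ n) = 1 := min_eq_left (by linarith)
  simp [auxF, this]

lemma auxF_mul (l : ℂ) (n : ℕ) (t : ℂ) : auxF l (n + 1) t * auxF l n t = auxF l (n + 1) t := by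
  by_cases h : 2 ≤ ‖t - l‖ * 4 ^ (n + 1)
  · simp [auxF_zero l _ t h]
  · rw [auxF_one l n t, mul_one]
    rw [pow_succ] at h
    linarith

lemma auxBump_cfc {D : Type*} [CStarAlgebra D] (u : D) [IsStarNormal u] (l : ℂ)
    (hl : l ∈ spectrum ℂ u) : AuxBump u l (fun n => cfc (auxF l n) u) where
  norm_le n := norm_cfc_le zero_le_one fun t _ => auxF_norm l n t
  succ_mul n := by
    rw [← cfc_mul _ _ u (auxF_cont _ _).continuousOn (auxF_cont _ _).continuousOn]
    simp only [auxF_mul]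
  ne_zero n h0 := by
    have := norm_apply_le_norm_cfc (auxF l n) u hl (auxF_cont _ _).continuousOn
    rw [h0, auxF_self] at this
    norm_num at this
  sa n := by
    rw [← cfc_star]
    congr 1
    funext t
    simp [auxF]
  comm n y h1 h2 := h1.cfc h2 _
  tend := by
    have hlim : Tendsto (fun n : ℕ => 2 * (1 / 4 : ℝ) ^ n) atTop (𝓝 0) := by
      simpa using (tendsto_pow_atTop_nhds_zero_of_lt_one (r := (1 / 4 : ℝ)) (by norm_num)
        (by norm_num)).const_mul 2
    refine squeeze_zero_norm (fun n => ?_) hlim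
    have e : u - algebraMap ℂ D l = cfc (fun t : ℂ => t - l) u := by
      rw [cfc_sub (fun t : ℂ => t) (fun _ => l) u, cfc_id' ℂ u, cfc_const l u]
    rw [e, ← cfc_mul _ _ u (auxF_cont _ _).continuousOn]
    refine norm_cfc_le (by positivity) fun t _ => ?_
    have h4 : (0 : ℝ) < 4 ^ n := by positivity
    by_cases h : 2 ≤ ‖t - l‖ * 4 ^ n
    · rw [auxF_zero l _ t h]
      simp
    · push Not at h
      rw [norm_mul]
      have h1 := auxF_norm l n t
      have h2 : ‖t - l‖ ≤ 2 * (1 / 4 : ℝ) ^ n := by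
        rw [one_div, inv_pow, ← div_eq_mul_inv, le_div_iff₀ h4]
        exact h.le
      nlinarith [norm_nonneg (t - l)]

lemma aux_exists_point {D : Type*} [CStarAlgebra D] (u : D) [IsStarNormal u] (z : D)
    (h1 : Commute u z) (h2 : Commute (star u) z) (hz : z ≠ 0) :
    ∃ l ∈ spectrum ℂ u, ¬ Tendsto (fun n => cfc (auxF l n) u * z) atTop (𝓝 0) := by
  by_contra! hcon
  set x := star z * z with hx
  have hsa : IsSelfAdjoint x := IsSelfAdjoint.star_mul_self z
  have h1' : Commute u (star z) := by simpa using h2.star_star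
  have h2' : Commute (star u) (star z) := h1.star_star
  have hux : ∀ f : ℂ → ℂ, Commute (cfc f u) x := fun f =>
    (h1'.mul_right h1).cfc (h2'.mul_right h2) f
  have hx0 : 0 < ‖x‖ := by
    rw [hx, CStarRing.norm_star_mul_self]
    have := norm_pos_iff.2 hz
    positivity
  have hcon' : ∀ l ∈ spectrum ℂ u, Tendsto (fun n => cfc (auxF l n) u * x) atTop (𝓝 0) := by
    intro l hl
    have := (hcon l hl).const_mul (star z)
    rw [mul_zero] at this
    refine this.congr fun n => ?_
    rw [← mul_assoc, ← (h1'.cfc h2' _).eq, mul_assoc]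
  set ε := ‖x‖ / 2 with hε
  have hε0 : 0 < ε := by positivity
  have key : ∃ f : ℂ → ℝ, Continuous f ∧ (∀ t, 0 ≤ f t) ∧ (∀ t ∈ spectrum ℂ u, 0 < f t) ∧
      ∃ C : ℝ, ∀ k : ℕ, ‖cfc (fun t => (f t : ℂ)) u * x ^ k‖ ≤ C * ε ^ k := by
    refine IsCompact.induction_on (spectrum.isCompact (𝕜 := ℂ) u)
      (p := fun s => ∃ f : ℂ → ℝ, Continuous f ∧ (∀ t, 0 ≤ f t) ∧ (∀ t ∈ s, 0 < f t) ∧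
      ∃ C : ℝ, ∀ k : ℕ, ‖cfc (fun t => (f t : ℂ)) u * x ^ k‖ ≤ C * ε ^ k) ?_ ?_ ?_ ?_
    · exact ⟨fun _ => 0, continuous_const, by simp, by simp, 0, by simp⟩
    · rintro s t hst ⟨f, hf, hf0, hft, C⟩
      exact ⟨f, hf, hf0, fun a ha => hft a (hst ha), C⟩
    · rintro s t ⟨f, hf, hf0, hft, C, hC⟩ ⟨f', hf', hf0', hft', C', hC'⟩
      refine ⟨fun a => f a + f' a, hf.add hf', fun a => add_nonneg (hf0 a) (hf0' a), ?_,
        C + C', fun k => ?_⟩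
      · rintro a (ha | ha)
        · exact add_pos_of_pos_of_nonneg (hft a ha) (hf0' a)
        · exact add_pos_of_nonneg_of_pos (hf0 a) (hft' a ha)
      · simp only [Complex.ofReal_add]
        rw [cfc_add (fun t => (f t : ℂ)) (fun t => (f' t : ℂ)) (a := u)
          (by fun_prop) (by fun_prop), add_mul]
        refine (norm_add_le _ _).trans ?_
        have := hC k
        have := hC' k
        linarith
    · intro l hl
      obtain ⟨n, hn⟩ := (Metric.tendsto_atTop.1 (hcon' l hl)) ε hε0
      have hn := hn n le_rfl
      rw [dist_zero_right] at hn
      let f : ℂ → ℝ := fun t => max 0 (min 1 (2 - ‖t - l‖ * 4 ^ (n + 1)))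
      have hf : Continuous f := by fun_prop
      refine ⟨{t | 0 < f t}, ?_, f, hf, fun t => le_max_left _ _, fun t ht => ht, 1, fun k => ?_⟩
      · refine mem_nhdsWithin_of_mem_nhds ((isOpen_lt continuous_const hf).mem_nhds ?_)
        simp [f]
      · change ‖cfc (auxF l (n + 1)) u * x ^ k‖ ≤ _
        have hb := auxBump_cfc u l hl
        have hgc : ∀ k : ℕ, cfc (auxF l (n + 1)) u * cfc (auxF l n) u ^ k
            = cfc (auxF l (n + 1)) u := by
          intro k
          induction k with
          | zero => simp
          | succ k ih =>
            have := hb.succ_mul n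
            rw [pow_succ', ← mul_assoc, this, ih]
        rw [← hgc k, mul_assoc, ← (hux _).mul_pow]
        refine (norm_mul_le _ _).trans ?_
        have h3 := hb.norm_le (n + 1)
        gcongr
        have hnt : Nontrivial D := ⟨z, 0, hz⟩
        refine (norm_pow_le _ _).trans ?_
        gcongr
  obtain ⟨f, hf, hf0, hfp, C, hC⟩ := key
  have hinv : ContinuousOn (fun t => ((f t : ℂ))⁻¹) (spectrum ℂ u) :=
    ContinuousOn.inv₀ (by fun_prop) (fun t ht => by exact_mod_cast (hfp t ht).ne')
  have hone : cfc (fun t => ((f t : ℂ))⁻¹) u * cfc (fun t => (f t : ℂ)) u = 1 := by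
    rw [← cfc_mul _ _ u hinv (by fun_prop), ← cfc_const_one ℂ u]
    refine cfc_congr fun t ht => ?_
    exact inv_mul_cancel₀ (by exact_mod_cast (hfp t ht).ne')
  set V := ‖cfc (fun t => ((f t : ℂ))⁻¹) u‖ with hV
  have hxk : ∀ k : ℕ, ‖x ^ k‖ ≤ V * (C * ε ^ k) := by
    intro k
    have e : x ^ k = cfc (fun t => ((f t : ℂ))⁻¹) u * (cfc (fun t => (f t : ℂ)) u * x ^ k) := by
      rw [← mul_assoc, hone, one_mul]
    rw [e]
    refine (norm_mul_le _ _).trans ?_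
    have := hC k
    gcongr
  have hbig : ∀ n : ℕ, (2 : ℝ) ^ (2 ^ n) ≤ V * C := by
    intro n
    have h3 := hxk (2 ^ n)
    rw [hsa.norm_pow_two_pow] at h3
    have e : ‖x‖ = 2 * ε := by rw [hε]; ring
    rw [e, mul_pow, ← mul_assoc] at h3
    exact le_of_mul_le_mul_right h3 (by positivity)
  have htop : Tendsto (fun n : ℕ => (2 : ℝ) ^ (2 ^ n)) atTop atTop :=
    (tendsto_pow_atTop_atTop_of_one_lt (one_lt_two)).comp
      (tendsto_pow_atTop_atTop_of_one_lt one_lt_two)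
  obtain ⟨n, hn⟩ := (htop.eventually_gt_atTop (V * C)).exists
  exact absurd (hbig n) (not_le.2 hn)


/-- Let `D` be a unital C*-algebra and `A ⊆ D` a unital C*-subalgebra which is
simple. Suppose `u ∈ D` is a unitary commuting with every element of `A`, and `u` is strongly
full in `D`. Then every nonzero element of the C*-subalgebra of `D` generated by `A ∪ {u}` is
full in `D`. -/
theorem strongly_full_cstar_algebra_generated_by_simple_and_unitary
    {D : Type*} [CStarAlgebra D]
    (S : StarSubalgebra ℂ D) (hS_closed : IsClosed (S : Set D))
    -- `S` is simple: its only closed two-sided ideals are `0` and `S`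
    (hS_simple : ∀ J : TwoSidedIdeal S, IsClosed (J : Set S) → J = ⊥ ∨ J = ⊤)
    (u : D) (hu : u ∈ unitary D)
    (hu_comm : ∀ x ∈ S, u * x = x * u)
    -- `u` is strongly full: every nonzero element of `C*(u)` is full in `D`
    (hu_sf : ∀ y ∈ (StarAlgebra.adjoin ℂ ({u} : Set D)).topologicalClosure, y ≠ 0 →
      closure ((TwoSidedIdeal.span {y} : TwoSidedIdeal D) : Set D) = Set.univ) :
    ∀ z ∈ (StarAlgebra.adjoin ℂ ((S : Set D) ∪ {u})).topologicalClosure, z ≠ 0 →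
      closure ((TwoSidedIdeal.span {z} : TwoSidedIdeal D) : Set D) = Set.univ := by
  intro z hz hz0
  have hn : IsStarNormal u := ⟨by
    rw [commute_iff_eq, Unitary.star_mul_self_of_mem hu, Unitary.mul_star_self_of_mem hu]⟩
  have hcS : ∀ x ∈ S, Commute u x ∧ Commute (star u) x := by
    intro x hx
    refine ⟨hu_comm x hx, ?_⟩
    have h : Commute u (star x) := hu_comm _ (star_mem hx)
    simpa using h.star_star
  have hcz : Commute u z ∧ Commute (star u) z := by
    have hle : (StarAlgebra.adjoin ℂ ((S : Set D) ∪ {u})).topologicalClosure ≤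
        StarSubalgebra.centralizer ℂ {u} := by
      refine StarSubalgebra.topologicalClosure_minimal (StarAlgebra.adjoin_le ?_)
        (Set.isClosed_centralizer _)
      rintro x (hx | hx)
      · rw [SetLike.mem_coe, StarSubalgebra.mem_centralizer_iff]
        rintro g rfl
        exact ⟨(hcS x hx).1.eq, (hcS x hx).2.eq⟩
      · rw [SetLike.mem_coe, StarSubalgebra.mem_centralizer_iff]
        rintro g rfl
        obtain rfl : x = g := hx
        exact ⟨rfl, hn.star_comm_self.eq⟩
    have := StarSubalgebra.mem_centralizer_iff ℂ |>.1 (hle hz) u rfl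
    exact this
  obtain ⟨l, hl, hnot⟩ := aux_exists_point u z hcz.1 hcz.2 hz0
  have hb := auxBump_cfc u l hl
  have hc : ∀ n, ∀ x ∈ S, Commute (cfc (auxF l n) u) x := fun n x hx =>
    hb.comm n x (hcS x hx).1 (hcS x hx).2
  have hzT : z ∈ auxT S hb hc := by
    have hle : (StarAlgebra.adjoin ℂ ((S : Set D) ∪ {u})).topologicalClosure ≤ auxT S hb hc := by
      refine StarSubalgebra.topologicalClosure_minimal (StarAlgebra.adjoin_le ?_)
        (auxT_closed hb hS_closed hS_simple hc)
      rintro x (hx | hx)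
      · exact ⟨fun n => hc n x hx, x, hx, by simp⟩
      · obtain rfl : x = u := hx
        exact ⟨fun n => hb.comm n x (Commute.refl x) hn.star_comm_self,
          algebraMap ℂ D l, algebraMap_mem S l, hb.tend⟩
    exact hle hz
  obtain ⟨-, s, hs, hlim⟩ := hzT
  have hs0 : s ≠ 0 := by
    rintro rfl
    simp only [sub_zero] at hlim
    exact hnot hlim
  obtain ⟨n, hmem⟩ := hb.mem_span hS_simple hc z s hs hs0 hlim
  have hfull := hu_sf (cfc (auxF l n) u) (cfc_mem_elemental _ _) (hb.ne_zero n)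
  refine Set.eq_univ_of_univ_subset (hfull ▸ closure_mono ?_)
  have hle : (TwoSidedIdeal.span {cfc (auxF l n) u} : TwoSidedIdeal D) ≤ TwoSidedIdeal.span {z} :=
    TwoSidedIdeal.span_le.2 (by simpa using hmem)
  exact hle
end

section
/- For every δ > 0 and every ε > 0 there exists δ₁ > 0 with the following property: for every unital C*-algebra A and all B, C ∈ A with ‖B‖ ≤ 1, 0 ≤ C ≤ 1, ‖BC − C‖ ≤ δ₁ and ‖CB − C‖ ≤ δ₁, one has ‖B·f_δ(C) − f_δ(C)‖ ≤ ε and ‖f_δ(C)·B − f_δ(C)‖ ≤ ε. -/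
/-- For every `δ > 0` and `ε > 0` there exists `δ₁ > 0` such that in any unital
C*-algebra `A`, whenever `‖B‖ ≤ 1`, `0 ≤ C ≤ 1`, `‖BC − C‖ ≤ δ₁` and `‖CB − C‖ ≤ δ₁`, one has
`‖B f_δ(C) − f_δ(C)‖ ≤ ε` and `‖f_δ(C) B − f_δ(C)‖ ≤ ε`, where `f_δ(t) = min (t/δ) 1` is applied
to `C` via continuous functional calculus. -/
theorem almost_commuting_with_fdelta
    (δ ε : ℝ) (hδ : 0 < δ) (hε : 0 < ε) :
    ∃ δ₁ > (0 : ℝ),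
      ∀ (A : Type) [CStarAlgebra A] [PartialOrder A] [StarOrderedRing A],
        ∀ B C : A, ‖B‖ ≤ 1 → 0 ≤ C → C ≤ 1 →
          ‖B * C - C‖ ≤ δ₁ → ‖C * B - C‖ ≤ δ₁ →
          ‖B * cfc (fun t : ℝ => min (t / δ) 1) C - cfc (fun t : ℝ => min (t / δ) 1) C‖ ≤ ε ∧
          ‖cfc (fun t : ℝ => min (t / δ) 1) C * B - cfc (fun t : ℝ => min (t / δ) 1) C‖ ≤ ε := by
  refine ⟨δ * ε, mul_pos hδ hε, ?_⟩
  intro A _ _ _ B C _ hC0 _ h1 h2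
  have hsa : IsSelfAdjoint C := IsSelfAdjoint.of_nonneg hC0
  have hpos : ∀ t : ℝ, 0 < max t δ := fun t => lt_max_of_lt_right hδ
  have hcont : Continuous (fun t : ℝ => (max t δ)⁻¹) :=
    (continuous_id.max continuous_const).inv₀ (fun t => (hpos t).ne')
  have hf : (fun t : ℝ => min (t / δ) 1) = fun t : ℝ => t * (max t δ)⁻¹ := by
    funext t
    rcases le_total t δ with h | h
    · rw [max_eq_right h, min_eq_left ((div_le_one hδ).2 h), div_eq_mul_inv]
    · rw [max_eq_left h, min_eq_right ((one_le_div hδ).2 h),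
        mul_inv_cancel₀ (lt_of_lt_of_le hδ h).ne']
  have hf' : (fun t : ℝ => min (t / δ) 1) = fun t : ℝ => (max t δ)⁻¹ * t := by
    rw [hf]; funext t; exact mul_comm _ _
  have e1 : cfc (fun t : ℝ => min (t / δ) 1) C = C * cfc (fun t : ℝ => (max t δ)⁻¹) C := by
    rw [hf, cfc_mul (fun t : ℝ => t) (fun t : ℝ => (max t δ)⁻¹) C continuous_id.continuousOn
      hcont.continuousOn, cfc_id' ℝ C]
  have e2 : cfc (fun t : ℝ => min (t / δ) 1) C = cfc (fun t : ℝ => (max t δ)⁻¹) C * C := by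
    rw [hf', cfc_mul (fun t : ℝ => (max t δ)⁻¹) (fun t : ℝ => t) C hcont.continuousOn
      continuous_id.continuousOn, cfc_id' ℝ C]
  have hn : ‖cfc (fun t : ℝ => (max t δ)⁻¹) C‖ ≤ δ⁻¹ := by
    refine norm_cfc_le (inv_nonneg.2 hδ.le) (fun t _ => ?_)
    rw [Real.norm_of_nonneg (inv_nonneg.2 (hpos t).le)]
    exact inv_anti₀ hδ (le_max_right _ _)
  have hb : δ * ε * δ⁻¹ = ε := by field_simp
  constructor
  · rw [e1, ← mul_assoc, ← sub_mul]
    calc _ ≤ _ := norm_mul_le _ _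
      _ ≤ δ * ε * δ⁻¹ := mul_le_mul h1 hn (norm_nonneg _) (mul_pos hδ hε).le
      _ = ε := hb
  · rw [e2, mul_assoc, ← mul_sub]
    calc _ ≤ _ := norm_mul_le _ _
      _ ≤ δ⁻¹ * (δ * ε) := mul_le_mul hn h2 (norm_nonneg _) (inv_nonneg.2 hδ.le)
      _ = ε := by rw [mul_comm, hb]
end

section
/- Let M be a unital C*-algebra, N a C*-algebra, and π : M → N a surjective *-homomorphism with kernel B. Let (e_n)_{n≥1} be an increasing sequence of projections in B forming an approximate unit for B (i.e., e_n b → b for all b ∈ B), and set e_0 = 0. Suppose A, A', A'' ∈ N are positive contractions and δ > 0 are such that A·A' = A' and A'' lies in the norm closure of { (A'−δ)₊ · y · (A'−δ)₊ : y ∈ N }. Let A₀ ∈ M be a contraction with π(A₀) = A and let ε > 0. Then for every natural number M₀ ≥ 0 there exists a positive contraction A''₀ ∈ M with A''₀ = (1−e_{M₀})·A''₀·(1−e_{M₀}), π(A''₀) = A'', and such that for all integers l ≥ 1, ‖A₀·(A''₀)^{1/l} − (A''₀)^{1/l}‖ < ε and ‖(A''₀)^{1/l}·A₀ − (A''₀)^{1/l}‖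 < ε. -/
lemma aux_spec01 {N : Type*} [CStarAlgebra N] [PartialOrder N] [StarOrderedRing N]
    {z : N} (hz : 0 ≤ z) (hz1 : ‖z‖ ≤ 1) : ∀ t ∈ spectrum ℝ z, 0 ≤ t ∧ t ≤ 1 := by
  intro t ht
  refine ⟨spectrum_nonneg_of_nonneg hz ht, ?_⟩
  rcases subsingleton_or_nontrivial N with h | h
  · simp [spectrum.of_subsingleton] at ht
  have := spectrum.norm_le_norm_of_mem ht
  exact (le_abs_self t).trans (this.trans hz1)

lemma aux_lift {M N : Type*} [CStarAlgebra M] [PartialOrder M] [StarOrderedRing M]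
    [CStarAlgebra N] [PartialOrder N] [StarOrderedRing N]
    (π : M →⋆ₐ[ℂ] N) (hπ : Function.Surjective π) (z : N) (hz : 0 ≤ z) (hz1 : ‖z‖ ≤ 1) :
    ∃ d : M, 0 ≤ d ∧ ‖d‖ ≤ 1 ∧ π d = z := by
  obtain ⟨b, hb⟩ := hπ z
  have hzs : IsSelfAdjoint z := .of_nonneg hz
  set s : M := (2⁻¹ : ℝ) • (b + star b) with hs
  have hsa : IsSelfAdjoint s := by
    rw [hs]
    exact (IsSelfAdjoint.all (2⁻¹ : ℝ)).smul (IsSelfAdjoint.add_star_self b)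
  have hps : π s = z := by
    have h1 : s = (2⁻¹ : ℂ) • (b + star b) := by
      rw [hs, ← Complex.coe_smul]; simp
    rw [h1, map_smul, map_add, map_star, hb, hzs.star_eq, ← two_smul ℂ z, smul_smul]
    simp
  have hcont : Continuous (fun t : ℝ => min (max t 0) 1) := by fun_prop
  refine ⟨cfc (fun t : ℝ => min (max t 0) 1) s, ?_, ?_, ?_⟩
  · exact cfc_nonneg fun x _ => by positivity
  · refine norm_cfc_le zero_le_one fun x _ => ?_
    rw [Real.norm_of_nonneg (by positivity)]
    exact min_le_right _ _
  · rw [StarAlgHom.map_cfc π _ s hcont.continuousOn (by fun_prop) hsa (by rw [hps]; exact hzs), hps]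
    conv_rhs => rw [← cfc_id' ℝ z]
    refine cfc_congr fun t ht => ?_
    obtain ⟨h0, h1⟩ := aux_spec01 hz hz1 t ht
    simp [h0, h1]

lemma aux_pow {M : Type*} [CStarAlgebra M] (u x : M) (hx : IsSelfAdjoint x) (k : ℕ) :
    u * x ^ (2 ^ k) = 0 → u * x = 0 := by
  induction k with
  | zero => simp
  | succ k ih =>
    intro h
    apply ih
    rw [← CStarRing.mul_star_self_eq_zero_iff, star_mul, star_pow, hx.star_eq]
    rw [pow_succ, pow_mul, sq] at h
    calc u * x ^ 2 ^ k * (x ^ 2 ^ k * star u) = (u * (x ^ 2 ^ k * x ^ 2 ^ k)) * star u := by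
          simp only [mul_assoc]
      _ = 0 := by rw [h, zero_mul]

lemma aux_root {M : Type*} [CStarAlgebra M] [PartialOrder M] [StarOrderedRing M]
    (r c : M) (hc : 0 ≤ c) (h : r * c = c) (l : ℕ) (hl : 1 ≤ l) :
    r * CFC.rpow c ((l : ℝ)⁻¹) = CFC.rpow c ((l : ℝ)⁻¹) := by
  set x := CFC.rpow c ((l : ℝ)⁻¹) with hx
  have hx0 : 0 ≤ x := CFC.rpow_nonneg
  have hl0 : (l : ℝ) ≠ 0 := by positivity
  have hxl : x ^ l = c := by
    rw [← CFC.rpow_natCast x l hx0, hx, CFC.rpow_eq_pow,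
      CFC.rpow_rpow_of_exponent_nonneg c _ _ (by positivity) (by positivity) hc,
      inv_mul_cancel₀ hl0, CFC.rpow_one c hc]
  have h1 : (r - 1) * x ^ (2 ^ l) = 0 := by
    have : 2 ^ l = l + (2 ^ l - l) := by have := Nat.lt_two_pow_self (n := l); omega
    rw [this, pow_add, hxl, ← mul_assoc, sub_mul, h, one_mul, sub_self, zero_mul]
  have h2 := aux_pow _ _ (.of_nonneg hx0) l h1
  rwa [sub_mul, one_mul, sub_eq_zero] at h2

lemma aux_unit {N : Type*} [CStarAlgebra N] [PartialOrder N] [StarOrderedRing N]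
    (G z : N) (hG : 0 ≤ G) (h : G * z = z) :
    cfc (fun t : ℝ => max (2 * t - 1) 0) G * z = z := by
  have hsa : IsSelfAdjoint G := .of_nonneg hG
  have hk : Continuous (fun t : ℝ => (max (1 - t) 2⁻¹)⁻¹) := by
    refine Continuous.inv₀ (by fun_prop) fun t => ?_
    positivity
  have e1 : cfc (fun t : ℝ => max (2 * t - 1) 0) G =
      1 - cfc (fun t : ℝ => (max (1 - t) 2⁻¹)⁻¹) G * (1 - G) := by
    have : (1 - G) = cfc (fun t : ℝ => 1 - t) G := by
      rw [cfc_sub (fun _ => (1 : ℝ)) (fun t => t) G, cfc_id' ℝ G, cfc_const_one ℝ G]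
    have hk2 : Continuous (fun t : ℝ => (max (1 - t) 2⁻¹)⁻¹ * (1 - t)) := hk.mul (by fun_prop)
    rw [this, ← cfc_mul _ _ G hk.continuousOn (by fun_prop), ← cfc_const_one ℝ G,
      ← cfc_sub (fun _ => (1 : ℝ)) _ G (by fun_prop) hk2.continuousOn]
    refine cfc_congr fun t _ => ?_
    rcases le_total t 2⁻¹ with ht | ht
    · have h3 : (0 : ℝ) < 1 - t := by norm_num at ht; linarith
      rw [max_eq_right (by linarith), max_eq_left (by norm_num at ht ⊢; linarith),
        inv_mul_cancel₀ h3.ne', sub_self]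
    · rw [max_eq_left (by norm_num at ht; linarith), max_eq_right (by norm_num at ht ⊢; linarith)]
      ring
  rw [e1, sub_mul, mul_assoc, sub_mul, h]
  simp

/-- (Paper's Lemma 4.1, with the corona algebra replaced by the codomain of a
surjective *-homomorphism `π` with kernel `B`.) Given an increasing approximate unit of
projections `(e n)` for the kernel of `π`, positive contractions `A, A', A'' ∈ N` with
`A A' = A'` and `A''` in the hereditary subalgebra generated by `(A' − δ)₊`, a contractive lift
`A₀` of `A`, and `ε > 0`, for every `M₀` there is a positive contractive lift `A''₀` of `A''`
in the corner `(1 − e M₀) M (1 − e M₀)` such that `A₀` almost commutes with all roots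
`(A''₀)^{1/l}` up to `ε`. -/
theorem lift_in_corner_almost_commuting
    {M N : Type*} [CStarAlgebra M] [PartialOrder M] [StarOrderedRing M]
    [CStarAlgebra N] [PartialOrder N] [StarOrderedRing N]
    (π : M →⋆ₐ[ℂ] N) (hπ : Function.Surjective π)
    (e : ℕ → M) (he0 : e 0 = 0)
    (he_sa : ∀ n, IsSelfAdjoint (e n)) (he_idem : ∀ n, e n * e n = e n)
    (he_mono : Monotone e)
    (he_ker : ∀ n, π (e n) = 0)
    (he_approx : ∀ b : M, π b = 0 →
      Filter.Tendsto (fun n => e n * b) Filter.atTop (nhds b))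
    (A A' A'' : N)
    (hA : 0 ≤ A) (hA_norm : ‖A‖ ≤ 1)
    (hA' : 0 ≤ A') (hA'_norm : ‖A'‖ ≤ 1)
    (hA'' : 0 ≤ A'') (hA''_norm : ‖A''‖ ≤ 1)
    (δ : ℝ) (hδ : 0 < δ)
    (hAA' : A * A' = A')
    (hA''_her : A'' ∈ closure {z : N | ∃ y : N,
      z = cfc (fun t : ℝ => max (t - δ) 0) A' * y * cfc (fun t : ℝ => max (t - δ) 0) A'})
    (A₀ : M) (hA₀_norm : ‖A₀‖ ≤ 1) (hA₀_lift : π A₀ = A)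
    (ε : ℝ) (hε : 0 < ε) :
    ∀ M₀ : ℕ, ∃ A''₀ : M, 0 ≤ A''₀ ∧ ‖A''₀‖ ≤ 1 ∧
      A''₀ = (1 - e M₀) * A''₀ * (1 - e M₀) ∧
      π A''₀ = A'' ∧
      ∀ l : ℕ, 1 ≤ l →
        ‖A₀ * CFC.rpow A''₀ ((l : ℝ)⁻¹) - CFC.rpow A''₀ ((l : ℝ)⁻¹)‖ < ε ∧
        ‖CFC.rpow A''₀ ((l : ℝ)⁻¹) * A₀ - CFC.rpow A''₀ ((l : ℝ)⁻¹)‖ < ε := by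
  intro M₀
  have hA's : IsSelfAdjoint A' := .of_nonneg hA'
  have hAs : IsSelfAdjoint A := .of_nonneg hA
  have hA''s : IsSelfAdjoint A'' := .of_nonneg hA''
  -- g(A')
  have hk : Continuous (fun t : ℝ => (max t δ)⁻¹) :=
    Continuous.inv₀ (by fun_prop) fun t => (lt_max_of_lt_right hδ).ne'
  set g : N := cfc (fun t : ℝ => t * (max t δ)⁻¹) A' with hg
  have hgc : Continuous (fun t : ℝ => t * (max t δ)⁻¹) := continuous_id.mul hk
  have hg_eq : g = A' * cfc (fun t : ℝ => (max t δ)⁻¹) A' := by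
    rw [hg, cfc_mul _ _ A' (by fun_prop) hk.continuousOn, cfc_id' ℝ A']
  have hg0 : 0 ≤ g := cfc_nonneg fun t ht => by
    have := spectrum_nonneg_of_nonneg hA' ht
    positivity
  have hg1 : ‖g‖ ≤ 1 := norm_cfc_le zero_le_one fun t ht => by
    have := spectrum_nonneg_of_nonneg hA' ht
    rw [Real.norm_of_nonneg (by positivity), ← div_eq_mul_inv]
    exact div_le_one_of_le₀ (le_max_left _ _) (by positivity)
  have hgs : IsSelfAdjoint g := .of_nonneg hg0
  have hAg : A * g = g := by rw [hg_eq, ← mul_assoc, hAA']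
  have hgA : g * A = g := by
    have := congrArg star hAg
    rwa [star_mul, hgs.star_eq, hAs.star_eq] at this
  have hgP : g * cfc (fun t : ℝ => max (t - δ) 0) A' = cfc (fun t : ℝ => max (t - δ) 0) A' := by
    rw [hg, ← cfc_mul _ _ A' hgc.continuousOn (by fun_prop)]
    refine cfc_congr fun t _ => ?_
    rcases le_total t δ with h | h
    · simp [h]
    · have : t ≠ 0 := by linarith
      simp [h, this]
  have hgA'' : g * A'' = A'' := by
    have hcl : IsClosed {z : N | g * z = z} := isClosed_eq (by fun_prop) (by fun_prop)
    refine closure_minimal ?_ hcl hA''_her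
    rintro z ⟨y, rfl⟩
    simp only [Set.mem_ofPred_eq, ← mul_assoc, hgP]
  -- lifts
  obtain ⟨X₁, hX₁0, hX₁1, hX₁π⟩ := aux_lift π hπ g hg0 hg1
  obtain ⟨d, hd0, hd1, hdπ⟩ := aux_lift π hπ A'' hA'' hA''_norm
  have hq : ∀ n, IsStarProjection (1 - e n) := fun n =>
    IsStarProjection.one_sub ⟨he_idem n, he_sa n⟩
  have hqn : ∀ n, ‖1 - e n‖ ≤ 1 := fun n => (hq n).norm_le
  have hqπ : ∀ n, π (1 - e n) = 1 := fun n => by simp [he_ker]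
  set q : M := 1 - e M₀ with hqdef
  have hqq : q * q = q := (hq M₀).isIdempotentElem
  have hqs : IsSelfAdjoint q := (hq M₀).isSelfAdjoint
  set X : M := q * X₁ * q with hX
  have hX0 : 0 ≤ X := IsSelfAdjoint.conjugate_nonneg hX₁0 hqs
  have hXs : IsSelfAdjoint X := .of_nonneg hX0
  have hX1 : ‖X‖ ≤ 1 := by
    calc ‖X‖ ≤ ‖q‖ * ‖X₁‖ * ‖q‖ := norm_mul₃_le
      _ ≤ 1 * 1 * 1 := by gcongr <;> exact hqn M₀
      _ = 1 := by norm_num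
  have hXπ : π X = g := by simp [hX, hqdef, he_ker, hX₁π]
  have hqX : q * X = X := by rw [hX, ← mul_assoc, ← mul_assoc, hqq]
  have key : ∀ b : M, π b = 0 → ∀ᶠ n in Filter.atTop, ‖(1 - e n) * b‖ < ε / 2 := by
    intro b hb
    have := (he_approx b hb).sub_const b |>.norm
    rw [sub_self, norm_zero] at this
    filter_upwards [this.eventually (gt_mem_nhds (half_pos hε))] with n hn
    rwa [sub_mul, one_mul, norm_sub_rev]
  obtain ⟨n, hn1, hn2⟩ := ((key (X * (A₀ - 1)) (by simp [hXπ, hA₀_lift, mul_sub, hgA])).and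
    (key (X * (star A₀ - 1))
      (by simp [hXπ, hA₀_lift, mul_sub, hgA, map_star, hAs.star_eq]))).exists
  set Y : M := X * (1 - e n) * X with hY
  have hns := (hq n).isSelfAdjoint
  have hY0 : 0 ≤ Y := IsSelfAdjoint.conjugate_nonneg (hq n).nonneg hXs
  have hYs : IsSelfAdjoint Y := .of_nonneg hY0
  have hY1 : ‖Y‖ ≤ 1 := by
    calc ‖Y‖ ≤ ‖X‖ * ‖1 - e n‖ * ‖X‖ := norm_mul₃_le
      _ ≤ 1 * 1 * 1 := by gcongr; exact hqn n
      _ = 1 := by norm_num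
  have hYπ : π Y = g * g := by rw [hY, map_mul, map_mul, hqπ, hXπ, mul_one]
  have hqY : q * Y = Y := by rw [hY, ← mul_assoc q, ← mul_assoc q, hqX]
  have hYr : ‖Y * (A₀ - 1)‖ < ε / 2 := by
    calc ‖Y * (A₀ - 1)‖ = ‖X * ((1 - e n) * (X * (A₀ - 1)))‖ := by simp only [hY, mul_assoc]
      _ ≤ ‖X‖ * ‖(1 - e n) * (X * (A₀ - 1))‖ := norm_mul_le _ _
      _ ≤ 1 * ‖(1 - e n) * (X * (A₀ - 1))‖ := by gcongr
      _ < ε / 2 := by rwa [one_mul]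
  have hYl : ‖(A₀ - 1) * Y‖ < ε / 2 := by
    rw [← norm_star]
    calc ‖star ((A₀ - 1) * Y)‖ = ‖X * ((1 - e n) * (X * (star A₀ - 1)))‖ := by
          rw [star_mul, hYs.star_eq, star_sub, star_one]; simp only [hY, mul_assoc]
      _ ≤ ‖X‖ * ‖(1 - e n) * (X * (star A₀ - 1))‖ := norm_mul_le _ _
      _ ≤ 1 * ‖(1 - e n) * (X * (star A₀ - 1))‖ := by gcongr
      _ < ε / 2 := by rwa [one_mul]
  -- functional calculus of Y
  have hmc : Continuous (fun t : ℝ => (max t 2⁻¹)⁻¹) := by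
    refine Continuous.inv₀ (by fun_prop) fun t => ?_
    positivity
  set m : M := cfc (fun t : ℝ => (max t 2⁻¹)⁻¹) Y with hm
  set f : M := cfc (fun t : ℝ => max (2 * t - 1) 0) Y with hf
  have hms : IsSelfAdjoint m := cfc_predicate _ _
  have hfs : IsSelfAdjoint f := cfc_predicate _ _
  have hm2 : ‖m‖ ≤ 2 := norm_cfc_le zero_le_two fun t _ => by
    rw [Real.norm_of_nonneg (by positivity)]
    exact inv_le_of_inv_le₀ (by norm_num) (le_max_right _ _)
  have hf1 : ‖f‖ ≤ 1 := norm_cfc_le zero_le_one fun t ht => by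
    obtain ⟨h0, h1⟩ := aux_spec01 hY0 hY1 t ht
    rw [Real.norm_of_nonneg (by positivity)]
    exact max_le (by linarith) zero_le_one
  have hYmf : Y * m * f = f := by
    have : Y * m = cfc (fun t : ℝ => t * (max t 2⁻¹)⁻¹) Y := by
      rw [cfc_mul _ _ Y (by fun_prop) hmc.continuousOn, cfc_id' ℝ Y]
    have hmc2 : Continuous (fun t : ℝ => t * (max t 2⁻¹)⁻¹) := continuous_id.mul hmc
    rw [this, hf, ← cfc_mul _ _ Y hmc2.continuousOn (by fun_prop)]
    refine cfc_congr fun t _ => ?_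
    rcases le_total t 2⁻¹ with h | h
    · have : 2 * t - 1 ≤ 0 := by norm_num at h; linarith
      simp [this]
    · have : t ≠ 0 := by norm_num at h; linarith
      rw [max_eq_left h, mul_inv_cancel₀ this, one_mul]
  have hfπ : π f = cfc (fun t : ℝ => max (2 * t - 1) 0) (g * g) := by
    rw [hf, StarAlgHom.map_cfc π _ Y (by fun_prop) (by fun_prop) hYs
      (by rw [hYπ]; simp [IsSelfAdjoint, hgs.star_eq]), hYπ]
  have hfA : π f * A'' = A'' := by
    rw [hfπ]
    refine aux_unit _ _ ?_ (by rw [mul_assoc, hgA'', hgA''])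
    simpa [hgs.star_eq] using star_mul_self_nonneg g
  have hAf : A'' * π f = A'' := by
    have := congrArg star hfA
    rwa [star_mul, hA''s.star_eq, ← map_star, hfs.star_eq] at this
  set c : M := f * d * f with hc
  have hc0 : 0 ≤ c := IsSelfAdjoint.conjugate_nonneg hd0 hfs
  have hcs : IsSelfAdjoint c := .of_nonneg hc0
  have hc1 : ‖c‖ ≤ 1 := by
    calc ‖c‖ ≤ ‖f‖ * ‖d‖ * ‖f‖ := norm_mul₃_le
      _ ≤ 1 * 1 * 1 := by gcongr
      _ = 1 := by norm_num
  have hrc : Y * m * c = c := by rw [hc, ← mul_assoc, ← mul_assoc, hYmf]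
  have hqc : q * c = c := by rw [← hrc, ← mul_assoc q, ← mul_assoc q, hqY]
  have hcq : c * q = c := by
    have := congrArg star hqc
    rwa [star_mul, hcs.star_eq, hqs.star_eq] at this
  refine ⟨c, hc0, hc1, by rw [hqc, hcq], by rw [hc, map_mul, map_mul, hdπ, hfA, hAf], ?_⟩
  intro l hl
  have hroot := aux_root _ _ hc0 hrc l hl
  have hl0 : (0 : ℝ) < (l : ℝ)⁻¹ := by positivity
  have hx1 : ‖CFC.rpow c ((l : ℝ)⁻¹)‖ ≤ 1 := by
    rw [CFC.rpow_eq_pow, CFC.norm_rpow c hl0 hc0]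
    exact Real.rpow_le_one (norm_nonneg _) hc1 hl0.le
  have hxs : IsSelfAdjoint (CFC.rpow c ((l : ℝ)⁻¹)) := .of_nonneg CFC.rpow_nonneg
  set x := CFC.rpow c ((l : ℝ)⁻¹)
  have hroot2 : x * (m * Y) = x := by
    have := congrArg star hroot
    rwa [star_mul, star_mul, hxs.star_eq, hms.star_eq, hYs.star_eq] at this
  constructor
  · calc ‖A₀ * x - x‖ = ‖((A₀ - 1) * Y) * m * x‖ := by
          conv_lhs => rw [← hroot]
          congr 1; noncomm_ring
      _ ≤ ‖(A₀ - 1) * Y‖ * ‖m‖ * ‖x‖ := norm_mul₃_le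
      _ ≤ ‖(A₀ - 1) * Y‖ * 2 * 1 := by gcongr
      _ < ε := by linarith
  · calc ‖x * A₀ - x‖ = ‖x * m * (Y * (A₀ - 1))‖ := by
          conv_lhs => rw [← hroot2]
          congr 1; noncomm_ring
      _ ≤ ‖x‖ * ‖m‖ * ‖Y * (A₀ - 1)‖ := norm_mul₃_le
      _ ≤ 1 * 2 * ‖Y * (A₀ - 1)‖ := by gcongr
      _ < ε := by linarith
end

section
/- Let C be a unital C*-algebra and A ⊆ C a unital C*-subalgebra. Suppose there exists v ∈ M₂(C) with v*v = 1_{M₂(C)} and v·diag(x, x)·v* = diag(x, 0) for all x ∈ A. Then vv* = diag(1, 0), every matrix entry of v lies in the relative commutant D := { c ∈ C : cx = xc for all x ∈ A }, and in M₂(D) the projection diag(1, 1) is Murray–von Neumann equivalent to diag(1, 0); in particular the unit of D is properly infinite. -/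
/-- (Paper's Lemma 2.2(a), with the absorption hypothesis replaced by its
consequence, the existence of `v`.) If `v ∈ M₂(C)` is an isometry with
`v diag(x,x) v* = diag(x,0)` for all `x` in the unital C*-subalgebra `A`, then
`v v* = diag(1,0)`, all entries of `v` lie in the relative commutant `D` of `A`, and in
`M₂(D)` the projection `diag(1,1)` is Murray–von Neumann equivalent to `diag(1,0)`;
in particular the unit of `D` is properly infinite. -/
theorem isometry_entries_in_commutant_properly_infinite
    {C : Type*} [CStarAlgebra C]
    (S : StarSubalgebra ℂ C) (hS_closed : IsClosed (S : Set C))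
    (v : Matrix (Fin 2) (Fin 2) C)
    (hv_isometry : star v * v = 1)
    (hv_conj : ∀ x ∈ S,
      v * Matrix.diagonal ![x, x] * star v = Matrix.diagonal ![x, 0]) :
    v * star v = Matrix.diagonal ![1, 0] ∧
    (∀ i j, ∀ x ∈ S, v i j * x = x * v i j) ∧
    ∃ w : Matrix (Fin 2) (Fin 2) C,
      (∀ i j, ∀ x ∈ S, w i j * x = x * w i j) ∧
      star w * w = 1 ∧ w * star w = Matrix.diagonal ![1, 0] := by
  have key : ∀ x ∈ S, v * Matrix.diagonal ![x, x] = Matrix.diagonal ![x, 0] * v := by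
    intro x hx
    rw [← hv_conj x hx, mul_assoc _ (star v) v, hv_isometry, mul_one]
  have h1 : v * star v = Matrix.diagonal ![1, 0] := by
    rw [← hv_conj 1 (one_mem S)]
    have : Matrix.diagonal ![(1 : C), 1] = 1 := by
      rw [← Matrix.diagonal_one]
      congr 1
      funext i
      fin_cases i <;> rfl
    rw [this, mul_one]
  have hz : ∀ j, v 1 j = 0 := by
    intro j
    have h := congrFun (congrFun (key 1 (one_mem S)) 1) j
    rw [Matrix.mul_diagonal, Matrix.diagonal_mul] at h
    fin_cases j <;> simpa using h
  have h2 : ∀ i j, ∀ x ∈ S, v i j * x = x * v i j := by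
    intro i j x hx
    have h := congrFun (congrFun (key x hx) 0) j
    rw [Matrix.mul_diagonal, Matrix.diagonal_mul] at h
    fin_cases i
    · fin_cases j <;> simpa using h
    · have := hz j
      simp [this]
  exact ⟨h1, h2, v, h2, hv_isometry, h1⟩
end

section
/- Let D be a unital C*-algebra and suppose there exists v ∈ M₂(D) with v*v = 1_{M₂(D)} and vv* = diag(1, 0). Then for every integer n ≥ 1 there is a *-isomorphism between Mₙ(D) and D. -/
theorem cuntz_family_exists {D : Type*} [CStarAlgebra D] (a b : D)
    (haa : star a * a = 1) (hbb : star b * b = 1) (hab : star a * b = 0) (hba : star b * a = 0)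
    (h : a * star a + b * star b = 1) (n : ℕ) :
    ∃ s : Fin (n + 1) → D, (∀ i j, star (s i) * s j = if i = j then 1 else 0) ∧
      ∑ i, s i * star (s i) = 1 := by
  induction n with
  | zero =>
    refine ⟨fun _ => 1, ?_, by simp⟩
    intro i j
    have hij : i = j := by omega
    simp [hij]
  | succ n ih =>
    obtain ⟨s, hs, hsum⟩ := ih
    refine ⟨Fin.cons a (fun i => b * s i), ?_, ?_⟩
    · intro i j
      refine Fin.cases ?_ (fun i => ?_) i <;> refine Fin.cases ?_ (fun j => ?_) j
      · simp [haa]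
      · simp [← mul_assoc, hab, (Fin.succ_ne_zero j).symm]
      · simp [mul_assoc, hba]
      · simp only [Fin.cons_succ, star_mul, Fin.succ_inj]
        rw [mul_assoc, ← mul_assoc (star b), hbb, one_mul, hs]
    · rw [Fin.sum_univ_succ]
      simp only [Fin.cons_zero, Fin.cons_succ, star_mul]
      have : ∑ i, b * s i * (star (s i) * star b) = b * (∑ i, s i * star (s i)) * star b := by
        rw [Finset.mul_sum, Finset.sum_mul]
        simp only [mul_assoc]
      rw [this, hsum, mul_one, h]

theorem matrix_iso_of_cuntz_family {D : Type*} [CStarAlgebra D] {n : ℕ} (s : Fin n → D)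
    (hs : ∀ i j, star (s i) * s j = if i = j then 1 else 0)
    (hsum : ∑ i, s i * star (s i) = 1) :
    Nonempty (Matrix (Fin n) (Fin n) D ≃⋆ₐ[ℂ] D) := by
  refine ⟨StarAlgEquiv.symm
    { toFun := fun d => Matrix.of fun i j => star (s i) * d * s j
      invFun := fun M => ∑ i, ∑ j, s i * M i j * star (s j)
      left_inv := ?_
      right_inv := ?_
      map_mul' := ?_
      map_add' := ?_
      map_star' := ?_
      map_smul' := ?_ }⟩
  · intro d
    have : ∀ i j, s i * (star (s i) * d * s j) * star (s j)
        = (s i * star (s i)) * d * (s j * star (s j)) := by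
      intro i j
      simp only [mul_assoc]
    simp only [Matrix.of_apply, this]
    simp only [← Finset.mul_sum, ← Finset.sum_mul, hsum, one_mul, mul_one]
  · intro M
    ext k l
    have : ∀ i j, star (s k) * (s i * M i j * star (s j)) * s l
        = (star (s k) * s i) * M i j * (star (s j) * s l) := by
      intro i j
      simp only [mul_assoc]
    simp only [Matrix.of_apply, Finset.mul_sum, Finset.sum_mul, this, hs]
    simp
  · intro x y
    ext i j
    have : ∀ k, star (s i) * x * s k * (star (s k) * y * s j)
        = (star (s i) * x) * (s k * star (s k)) * (y * s j) := by
      intro k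
      simp only [mul_assoc]
    simp only [Matrix.mul_apply, Matrix.of_apply, this]
    rw [← Finset.sum_mul, ← Finset.mul_sum, hsum]
    simp only [mul_assoc, mul_one, one_mul]
  · intro x y
    ext i j
    simp [mul_add, add_mul]
  · intro x
    ext i j
    simp [Matrix.star_apply, mul_assoc]
  · intro c x
    ext i j
    simp

/-- Let `D` be a unital C*-algebra and suppose there exists `v ∈ M₂(D)` with
`v* v = 1` and `v v* = diag(1, 0)`. Then for every integer `n ≥ 1` there is a *-isomorphism
between `Mₙ(D)` and `D`. -/
theorem matrix_algebra_iso_of_one_equiv_two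
    {D : Type*} [CStarAlgebra D]
    (v : Matrix (Fin 2) (Fin 2) D)
    (hv_isometry : star v * v = 1)
    (hv_range : v * star v = Matrix.diagonal ![1, 0]) :
    ∀ n : ℕ, 1 ≤ n → Nonempty (Matrix (Fin n) (Fin n) D ≃⋆ₐ[ℂ] D) := by
  intro n hn
  obtain ⟨m, rfl⟩ : ∃ m, n = m + 1 := ⟨n - 1, by omega⟩
  have hv : v = Matrix.diagonal ![1, 0] * v := by
    rw [← hv_range, mul_assoc, hv_isometry, mul_one]
  have h1 : ∀ j, v 1 j = 0 := by
    intro j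
    rw [hv]
    simp [Matrix.diagonal_mul]
  have hs : ∀ i j, star (v 0 i) * v 0 j = (1 : Matrix (Fin 2) (Fin 2) D) i j := by
    intro i j
    rw [← hv_isometry]
    simp [Matrix.mul_apply, Fin.sum_univ_two, Matrix.star_apply, h1]
  have hr : v 0 0 * star (v 0 0) + v 0 1 * star (v 0 1) = 1 := by
    have := congrFun (congrFun hv_range 0) 0
    simpa [Matrix.mul_apply, Fin.sum_univ_two, Matrix.star_apply] using this
  obtain ⟨s, h2, h3⟩ := cuntz_family_exists (v 0 0) (v 0 1) (by simp [hs]) (by simp [hs])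
    (by simp [hs]) (by simp [hs]) hr m
  exact matrix_iso_of_cuntz_family s h2 h3
end

section
/- Let D be a unital C*-algebra and let u, s ∈ D be unitaries such that s is homotopic to 1 within the unitary group of D and diag(u, 1) is homotopic to diag(1, 1) within the unitary group of M₂(D). Suppose there exists w ∈ M₂(D) with w*w = 1_{M₂(D)}, ww* = diag(1, 0), and w·diag(u, s)·w* = diag(u, 0). Then u is homotopic to 1 within the unitary group of D. -/
open Matrix in
private lemma corner_col {D : Type*} [CStarAlgebra D] (X : Matrix (Fin 2) (Fin 2) D)
    (h : X * diagonal ![1, 0] = X) : X 0 1 = 0 := by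
  rw [← h]; simp

open Matrix in
private lemma corner_unit {D : Type*} [CStarAlgebra D] (w V : Matrix (Fin 2) (Fin 2) D)
    (h1 : star w * w = 1) (h2 : w * star w = diagonal ![1, 0]) (hV : V * star V = 1) :
    (w * V * star w) 0 0 * star ((w * V * star w) 0 0) = 1 := by
  have hc : (w * V * star w) 0 1 = 0 := by
    apply corner_col
    rw [← h2]
    calc w * V * star w * (w * star w) = w * V * (star w * w) * star w := by noncomm_ring
      _ = _ := by rw [h1, mul_one]
  have hp : (w * V * star w) * star (w * V * star w) = diagonal ![1, 0] := by
    rw [← h2]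
    simp only [star_mul, star_star]
    calc w * V * star w * (w * (star V * star w))
        = w * V * (star w * w) * (star V * star w) := by noncomm_ring
      _ = w * (V * star V) * star w := by rw [h1]; noncomm_ring
      _ = _ := by rw [hV, mul_one]
  have h00 := congrFun (congrFun hp 0) 0
  rw [mul_apply, Fin.sum_univ_two, hc] at h00
  simpa [star_apply] using h00

private lemma corner_mem {D : Type*} [CStarAlgebra D] (w V : Matrix (Fin 2) (Fin 2) D)
    (h1 : star w * w = 1) (h2 : w * star w = Matrix.diagonal ![1, 0])
    (hV : V ∈ unitary (Matrix (Fin 2) (Fin 2) D)) :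
    (w * V * star w) 0 0 ∈ unitary D := by
  rw [Unitary.mem_iff] at hV ⊢
  refine ⟨?_, corner_unit w V h1 h2 hV.2⟩
  have := corner_unit w (star V) h1 h2 (by simpa using hV.1)
  have e : (w * star V * star w) 0 0 = star ((w * V * star w) 0 0) := by
    rw [← Matrix.star_apply]; simp only [star_mul, star_star, mul_assoc]
  rwa [e, star_star] at this

private lemma diag_mem {D : Type*} [CStarAlgebra D] (u s : D) (hu : u ∈ unitary D)
    (hs : s ∈ unitary D) : Matrix.diagonal ![u, s] ∈ unitary (Matrix (Fin 2) (Fin 2) D) := by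
  rw [Unitary.mem_iff] at *
  rw [Matrix.star_eq_conjTranspose, Matrix.diagonal_conjTranspose, Matrix.diagonal_mul_diagonal,
    Matrix.diagonal_mul_diagonal, ← Matrix.diagonal_one]
  constructor <;> congr 1 <;> ext i <;> fin_cases i <;> simp [hu, hs]


/-- (The concluding conjugation argument in the paper's Lemmas 2.4 and 2.9.)
Let `u, s` be unitaries in a unital C*-algebra `D` such that `s` is homotopic to `1` in the
unitary group of `D` and `diag(u,1)` is homotopic to `diag(1,1)` in the unitary group of
`M₂(D)`. If there is `w ∈ M₂(D)` with `w* w = 1`, `w w* = diag(1,0)`, and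
`w diag(u,s) w* = diag(u,0)`, then `u` is homotopic to `1` in the unitary group of `D`. -/
theorem unitary_homotopic_to_one_of_conjugation
    {D : Type*} [CStarAlgebra D]
    (u s : D) (hu : u ∈ unitary D) (hs : s ∈ unitary D)
    (hs_homotopic : Joined (⟨s, hs⟩ : unitary D) 1)
    (hdiag : Matrix.diagonal ![u, 1] ∈ unitary (Matrix (Fin 2) (Fin 2) D))
    (hdiag_homotopic :
      Joined (⟨Matrix.diagonal ![u, 1], hdiag⟩ : unitary (Matrix (Fin 2) (Fin 2) D)) 1)
    (w : Matrix (Fin 2) (Fin 2) D)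
    (hw_isometry : star w * w = 1)
    (hw_range : w * star w = Matrix.diagonal ![1, 0])
    (hw_conj : w * Matrix.diagonal ![u, s] * star w = Matrix.diagonal ![u, 0]) :
    Joined (⟨u, hu⟩ : unitary D) 1 := by
  have j1 : Joined (⟨Matrix.diagonal ![u, s], diag_mem u s hu hs⟩ :
      unitary (Matrix (Fin 2) (Fin 2) D)) ⟨Matrix.diagonal ![u, 1], hdiag⟩ := by
    have hc : Continuous (fun x : unitary D => (⟨Matrix.diagonal ![u, (x : D)],
        diag_mem u x hu x.2⟩ : unitary (Matrix (Fin 2) (Fin 2) D))) := by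
      refine Continuous.subtype_mk (Continuous.matrix_diagonal ?_) _
      refine continuous_pi fun i => ?_
      fin_cases i
      · exact continuous_const
      · exact continuous_subtype_val
    exact hs_homotopic.map hc
  have hc : Continuous (fun V : unitary (Matrix (Fin 2) (Fin 2) D) =>
      (⟨(w * (V : Matrix (Fin 2) (Fin 2) D) * star w) 0 0,
        corner_mem w V hw_isometry hw_range V.2⟩ : unitary D)) := by
    refine Continuous.subtype_mk (Continuous.matrix_elem ?_ 0 0) _
    exact (continuous_const.matrix_mul continuous_subtype_val).matrix_mul continuous_const
  have j2 := (j1.trans hdiag_homotopic).map hc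
  convert j2 using 1
  · apply Subtype.ext
    simp [hw_conj]
  · apply Subtype.ext
    simp [hw_range]
end

section
/- Let π : M → N be a surjective *-homomorphism between C*-algebras and let b ∈ M be a positive element. Then for every positive contraction y in the norm closure of { π(b)·z·π(b) : z ∈ N } there exists a positive contraction x in the norm closure of { b·m·b : m ∈ M } with π(x) = y. -/
def heredSub {M : Type*} [NonUnitalCStarAlgebra M] (b : M) (hb : IsSelfAdjoint b) :
    NonUnitalStarSubalgebra ℂ M where
  carrier := {w : M | ∃ m : M, w = b * m * b}
  add_mem' := by
    rintro _ _ ⟨m, rfl⟩ ⟨n, rfl⟩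
    exact ⟨m + n, by rw [mul_add, add_mul]⟩
  zero_mem' := ⟨0, by simp⟩
  mul_mem' := by
    rintro _ _ ⟨m, rfl⟩ ⟨n, rfl⟩
    exact ⟨m * b * b * n, by simp only [mul_assoc]⟩
  smul_mem' := by
    rintro c _ ⟨m, rfl⟩
    exact ⟨c • m, by rw [mul_smul_comm, smul_mul_assoc]⟩
  star_mem' := by
    rintro _ ⟨m, rfl⟩
    exact ⟨star m, by simp only [star_mul, hb.star_eq, mul_assoc]⟩

theorem heredSub_lift
    {M N : Type*} [NonUnitalCStarAlgebra M] [NonUnitalCStarAlgebra N]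
    (π : M →⋆ₙₐ[ℂ] N) (H : NonUnitalStarSubalgebra ℂ M) (hH : IsClosed (H : Set M))
    (w : M) (hw : w ∈ H) (hsa : IsSelfAdjoint w) (lo hi : ℝ) (hlo : lo ≤ 0) (hhi : 0 ≤ hi)
    (hs : ∀ t ∈ quasispectrum ℝ (π w), lo ≤ t ∧ t ≤ hi) :
    cfcₙ (fun t : ℝ => max lo (min t hi)) w ∈ H ∧
      π (cfcₙ (fun t : ℝ => max lo (min t hi)) w) = π w := by
  have hc : Continuous (fun t : ℝ => max lo (min t hi)) := by fun_prop
  have h0 : (fun t : ℝ => max lo (min t hi)) 0 = 0 := by simp [hlo, hhi]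
  have hsa' : IsSelfAdjoint (π w) := hsa.map π
  have hπc : Continuous π :=
    AddMonoidHomClass.continuous_of_bound π 1 fun x => by
      rw [one_mul]; exact NonUnitalStarAlgHom.norm_apply_le π x
  constructor
  · have := hH
    exact cfcₙ_mem (𝕜' := ℂ) _ hw
  · rw [NonUnitalStarAlgHom.map_cfcₙ π _ w hc.continuousOn h0 hπc hsa hsa']
    conv_rhs => rw [← cfcₙ_id ℝ (π w)]
    refine cfcₙ_congr fun t ht => ?_
    obtain ⟨h1, h2⟩ := hs t ht
    simp [h1, h2]

theorem heredSub_lift_norm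
    {M N : Type*} [NonUnitalCStarAlgebra M] [NonUnitalCStarAlgebra N]
    (π : M →⋆ₙₐ[ℂ] N) (H : NonUnitalStarSubalgebra ℂ M) (hH : IsClosed (H : Set M))
    (w : M) (hw : w ∈ H) (hsa : IsSelfAdjoint w) :
    ∃ x ∈ H, π x = π w ∧ ‖x‖ ≤ ‖π w‖ := by
  have hsa' : IsSelfAdjoint (π w) := hsa.map π
  have := heredSub_lift π H hH w hw hsa (-‖π w‖) ‖π w‖ (by simp) (by simp) (by
    intro t ht
    have := norm_apply_le_norm_cfcₙ (𝕜 := ℝ) id (π w) ht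
    rw [cfcₙ_id ℝ (π w)] at this
    exact abs_le.mp this)
  refine ⟨_, this.1, this.2, norm_cfcₙ_le fun t _ => ?_⟩
  rw [Real.norm_eq_abs, abs_le]
  refine ⟨le_max_left _ _, max_le ?_ (min_le_right _ _)⟩
  linarith [norm_nonneg (π w)]

/-- Let `π : M → N` be a surjective *-homomorphism between C*-algebras and
`b ∈ M` a positive element. Then every positive contraction `y` in the hereditary subalgebra
of `N` generated by `π b` lifts to a positive contraction `x` in the hereditary subalgebra
of `M` generated by `b` with `π x = y`. -/
theorem lift_positive_contraction_hereditary
    {M N : Type*} [NonUnitalCStarAlgebra M] [PartialOrder M] [StarOrderedRing M]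
    [NonUnitalCStarAlgebra N] [PartialOrder N] [StarOrderedRing N]
    (π : M →⋆ₙₐ[ℂ] N) (hπ : Function.Surjective π)
    (b : M) (hb : 0 ≤ b) :
    ∀ y ∈ closure {w : N | ∃ z : N, w = π b * z * π b}, 0 ≤ y → ‖y‖ ≤ 1 →
      ∃ x ∈ closure {w : M | ∃ m : M, w = b * m * b},
        0 ≤ x ∧ ‖x‖ ≤ 1 ∧ π x = y := by
  intro y hy hy0 hy1
  have hbs : IsSelfAdjoint b := hb.isSelfAdjoint
  set H : NonUnitalStarSubalgebra ℂ M := (heredSub b hbs).topologicalClosure with hHdef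
  have hH : IsClosed (H : Set M) := NonUnitalStarSubalgebra.isClosed_topologicalClosure _
  have : CompleteSpace H := hH.completeSpace_coe
  let K : AddSubgroup N :=
    { carrier := {w : N | ∃ z : N, w = π b * z * π b}
      add_mem' := by
        rintro _ _ ⟨m, rfl⟩ ⟨n, rfl⟩
        exact ⟨m + n, by rw [mul_add, add_mul]⟩
      zero_mem' := ⟨0, by simp⟩
      neg_mem' := by
        rintro _ ⟨m, rfl⟩
        exact ⟨-m, by simp⟩ }
  let f : NormedAddGroupHom H N :=
    { toFun := fun x => π x
      map_add' := fun x y => by simp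
      bound' := ⟨1, fun x => by
        rw [one_mul]
        exact NonUnitalStarAlgHom.norm_apply_le π (x : M)⟩ }
  have hf : f.SurjectiveOnWith K 2 := by
    rintro _ ⟨z, rfl⟩
    obtain ⟨m, rfl⟩ := hπ z
    set w : M := b * m * b with hw
    have hwH : w ∈ H := NonUnitalStarSubalgebra.le_topologicalClosure _ ⟨m, rfl⟩
    have hπw : π b * π m * π b = π w := by simp [hw]
    rw [hπw]
    have hre : (realPart w : M) ∈ H := by
      rw [realPart_apply_coe, ← Complex.coe_smul]
      exact H.smul_mem' _ (add_mem hwH (star_mem hwH))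
    have him : (imaginaryPart w : M) ∈ H := by
      rw [imaginaryPart_apply_coe, ← Complex.coe_smul]
      exact H.smul_mem' _ (H.smul_mem' _ (sub_mem hwH (star_mem hwH)))
    have hre' : π (realPart w : M) = (realPart (π w) : N) := by
      simp [realPart_apply_coe, ← Complex.coe_smul, map_star]
    have him' : π (imaginaryPart w : M) = (imaginaryPart (π w) : N) := by
      simp [imaginaryPart_apply_coe, ← Complex.coe_smul, map_star]
    obtain ⟨x₁, h1, h1', h1''⟩ := heredSub_lift_norm π H hH _ hre (realPart w).2
    obtain ⟨x₂, h2, h2', h2''⟩ := heredSub_lift_norm π H hH _ him (imaginaryPart w).2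
    rw [hre'] at h1' h1''
    rw [him'] at h2' h2''
    refine ⟨⟨x₁ + Complex.I • x₂, add_mem h1 (H.smul_mem' _ h2)⟩, ?_, ?_⟩
    · change π (x₁ + Complex.I • x₂) = π w
      rw [map_add, map_smul, h1', h2']
      exact realPart_add_I_smul_imaginaryPart (π w)
    · change ‖x₁ + Complex.I • x₂‖ ≤ 2 * ‖π w‖
      have e1 : ‖x₁‖ ≤ ‖π w‖ := h1''.trans (realPart.norm_le (π w))
      have e2 : ‖x₂‖ ≤ ‖π w‖ := h2''.trans (imaginaryPart.norm_le (π w))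
      have := norm_add_le x₁ (Complex.I • x₂)
      rw [norm_smul, Complex.norm_I, one_mul] at this
      linarith
  obtain ⟨⟨x, hxH⟩, hx, -⟩ :=
    controlled_closure_of_complete (by norm_num) one_pos hf y hy
  replace hx : π x = y := hx
  have hre : (realPart x : M) ∈ H := by
    rw [realPart_apply_coe, ← Complex.coe_smul]
    exact H.smul_mem' _ (add_mem hxH (star_mem hxH))
  have hre' : π (realPart x : M) = y := by
    have : π (realPart x : M) = (realPart (π x) : N) := by
      simp [realPart_apply_coe, ← Complex.coe_smul, map_star]
    rw [this, hx, hy0.isSelfAdjoint.coe_realPart]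
  obtain ⟨g1, g2⟩ := heredSub_lift π H hH _ hre (realPart x).2 0 1 le_rfl zero_le_one (by
    rw [hre']
    intro t ht
    have hsa := hy0.isSelfAdjoint
    have := norm_apply_le_norm_cfcₙ (𝕜 := ℝ) id y ht
    rw [cfcₙ_id ℝ y] at this
    exact ⟨quasispectrum_nonneg_of_nonneg y hy0 t ht, (abs_le.mp (this.trans hy1)).2⟩)
  refine ⟨_, g1, cfcₙ_nonneg fun t _ => le_max_left _ _, norm_cfcₙ_le fun t _ => ?_, g2.trans hre'⟩
  rw [Real.norm_eq_abs, abs_of_nonneg (le_max_left _ _)]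
  exact max_le zero_le_one (min_le_right _ _)
end
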